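/- arXiv:1805.02018 — 6 statements merged into one kernel-verified Lean document; each statement's English description precedes it below -/
import Mathlib

section
/- Let X be a complex vector space and 𝔔 a Hermitian form on X. Let V ⊆ X be a subspace with dim X/V < ∞ such that V^{𝔔𝔔} = V + ker 𝔔, and assume that both m⁻(𝔔) and m⁻(𝔔|_{V^𝔔}) are finite. Then m⁻(𝔔) − m⁻(𝔔|_V) = dim((V ∩ V^𝔔 + ker 𝔔)/ker 𝔔) + m⁻(𝔔|_{V^𝔔}). -/
open Module Submodule

noncomputable section

variable {X : Type*} [AddCommGroup X] [Module ℂ X]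

/-- The `Q`-orthogonal complement (polar) `V^𝔔` of a subspace `V` with respect to a
sesquilinear form `Q` (conjugate-linear in the first variable). -/
def qPolar (Q : X →ₗ⋆[ℂ] X →ₗ[ℂ] ℂ) (V : Submodule ℂ X) : Submodule ℂ X where
  carrier := {x | ∀ v ∈ V, Q x v = 0}
  add_mem' := by
    intro a b ha hb v hv
    simp only [map_add, LinearMap.add_apply, ha v hv, hb v hv, add_zero]
  zero_mem' := by
    intro v hv
    simp
  smul_mem' := by
    intro c x hx v hv
    simp only [LinearMap.map_smulₛₗ, LinearMap.smul_apply, hx v hv, smul_zero]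

/-- The kernel of the form `Q`, i.e. `X^𝔔`. -/
def qKer (Q : X →ₗ⋆[ℂ] X →ₗ[ℂ] ℂ) : Submodule ℂ X := qPolar Q ⊤

/-- The Morse index `m⁻(𝔔|_V)`: the supremum of dimensions of subspaces of `V`
on which `Q` is negative definite, as an extended natural number. -/
def negIdx (Q : X →ₗ⋆[ℂ] X →ₗ[ℂ] ℂ) (V : Submodule ℂ X) : ℕ∞ :=
  sSup {k : ℕ∞ | ∃ W : Submodule ℂ X, W ≤ V ∧ FiniteDimensional ℂ W ∧
    (∀ x ∈ W, x ≠ 0 → (Q x x).re < 0) ∧ k = (Module.finrank ℂ W : ℕ∞)}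

/-!
Viewed as a map from `X` to its dual, `Q` identifies `W.map Q` with `W / (W ∩ ker Q)`, so dimensions
modulo the kernel are dimensions of spaces of functionals. Let `U.map Q` be finite-dimensional,
`S = U + U^𝔔` and `R = U ∩ U^𝔔`. By finite-dimensional duality every functional vanishing on `U^𝔔`
is `Q u` for some `u ∈ U`, hence the functionals vanishing on `S` are the `Q r` with `r ∈ R`, and
`codim S = dim (R.map Q)`.

The Morse index is additive on the orthogonal sum `S`. Passing from `S` to `X` raises it by at most
`codim S`. It also raises it by at least `dim (R.map Q)`: if `A ⊆ S` is negative definite, then `Q`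
is nonpositive on `A + R`, and a subspace on which `Q` is nonpositive has dimension at most `m⁻(Q)`
modulo `ker Q`. For the last fact take a maximal negative definite `M`. By Cauchy–Schwarz on
`M^𝔔`, where `Q` is nonnegative, a nonpositive vector of `M^𝔔` lies in `ker Q`, so restricting
functionals to `M` is injective on the image of the nonpositive subspace.

The theorem is the case `U = V^𝔔`, where `U^𝔔 = V + ker Q`.
-/

section FiniteRank

variable {R S M N : Type*} [Ring R] [Ring S] [AddCommGroup M] [Module R M] [AddCommGroup N]
  [Module S N] {σ : R →+* S} [RingHomSurjective σ]

lemma finrank_map_of_injOn (hσ : Function.Injective σ) (f : M →ₛₗ[σ] N) {W : Submodule R M}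
    (hf : Set.InjOn f W) : finrank S (W.map f) = finrank R W := by
  let e : W ≃+ W.map f := AddEquiv.ofBijective (f.submoduleMap W)
    ⟨fun a b h => Subtype.ext (hf a.2 b.2 (congrArg Subtype.val h)),
      f.submoduleMap_surjective W⟩
  have hrank := lift_rank_eq_of_equiv_equiv σ e ⟨hσ, σ.surjective⟩
    fun r w => Subtype.ext (map_smulₛₗ f r (w : M))
  simpa [finrank] using (congrArg Cardinal.toNat hrank).symm

lemma finrank_map_mkQ_ker (hσ : Function.Injective σ) (f : M →ₛₗ[σ] N) (W : Submodule R M) :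
    finrank R (W.map (LinearMap.ker f).mkQ) = finrank S (W.map f) := by
  have hinj : Function.Injective ((LinearMap.ker f).liftQ f le_rfl) :=
    LinearMap.ker_eq_bot.1 (ker_liftQ_eq_bot _ f _ le_rfl)
  rw [← finrank_map_of_injOn hσ _ hinj.injOn, ← Submodule.map_comp, liftQ_mkQ]

end FiniteRank

section Codimension

variable {K E : Type*} [DivisionRing K] [AddCommGroup E] [Module K E]

lemma finrank_le_of_disjoint_of_le_sup {W N P : Submodule K E} [FiniteDimensional K N]
    (hWP : Disjoint W P) (hW : W ≤ N ⊔ P) : finrank K W ≤ finrank K N := by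
  have hinj : Set.InjOn P.mkQ W := by
    rw [← LinearMap.disjoint_ker_iff_injOn, ker_mkQ]
    exact hWP
  have hmap : W.map P.mkQ ≤ N.map P.mkQ := by
    simpa [Submodule.map_sup] using Submodule.map_mono (f := P.mkQ) hW
  calc finrank K W = finrank K (W.map P.mkQ) :=
        (finrank_map_of_injOn Function.injective_id _ hinj).symm
    _ ≤ finrank K (N.map P.mkQ) := finrank_mono hmap
    _ ≤ finrank K N := finrank_map_le _ _

lemma finrank_le_finrank_inf_add_finrank_quotient (W S : Submodule K E) [FiniteDimensional K W]
    [FiniteDimensional K (E ⧸ S)] :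
    finrank K W ≤ finrank K ↥(W ⊓ S) + finrank K (E ⧸ S) := by
  let f := S.mkQ.domRestrict W
  have hker : finrank K (LinearMap.ker f) = finrank K ↥(W ⊓ S) := by
    rw [← finrank_map_subtype_eq, LinearMap.ker_domRestrict, ker_mkQ, map_comap_subtype]
  rw [← f.finrank_range_add_finrank_ker, hker, add_comm]
  exact Nat.add_le_add_left (finrank_le _) _

end Codimension

section Duality

variable {Q : X →ₗ⋆[ℂ] X →ₗ[ℂ] ℂ}

lemma qKer_eq_ker (Q : X →ₗ⋆[ℂ] X →ₗ[ℂ] ℂ) : qKer Q = LinearMap.ker Q := by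
  ext x
  exact ⟨fun hx => LinearMap.ext fun y => hx y mem_top, fun hx y _ => LinearMap.congr_fun hx y⟩

lemma qKer_le_qPolar (Q : X →ₗ⋆[ℂ] X →ₗ[ℂ] ℂ) (V : Submodule ℂ X) : qKer Q ≤ qPolar Q V :=
  fun _ hx v _ => hx v mem_top

lemma qPolar_anti {V W : Submodule ℂ X} (h : V ≤ W) : qPolar Q W ≤ qPolar Q V :=
  fun _ hx v hv => hx v (h hv)

lemma le_qPolar_comm (hQ : Q.IsSymm) {V W : Submodule ℂ X} :
    V ≤ qPolar Q W ↔ W ≤ qPolar Q V :=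
  ⟨fun h _ hw _ hv => hQ.eq_iff.1 (h hv _ hw), fun h _ hv _ hw => hQ.eq_iff.1 (h hw _ hv)⟩

lemma qPolar_eq_dualCoannihilator (hQ : Q.IsSymm) (W : Submodule ℂ X) :
    qPolar Q W = (W.map Q).dualCoannihilator := by
  ext x
  simp only [mem_dualCoannihilator, mem_map, forall_exists_index, and_imp,
    forall_apply_eq_imp_iff₂]
  exact forall₂_congr fun w _ => hQ.eq_iff

lemma dualAnnihilator_qPolar (hQ : Q.IsSymm) (W : Submodule ℂ X)
    [FiniteDimensional ℂ (W.map Q)] : (qPolar Q W).dualAnnihilator = W.map Q := by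
  rw [qPolar_eq_dualCoannihilator hQ, Subspace.dualCoannihilator_dualAnnihilator_eq]

lemma dualAnnihilator_sup_qPolar (hQ : Q.IsSymm) (U : Submodule ℂ X)
    [FiniteDimensional ℂ (U.map Q)] :
    (U ⊔ qPolar Q U).dualAnnihilator = (U ⊓ qPolar Q U).map Q := by
  rw [dualAnnihilator_sup_eq, dualAnnihilator_qPolar hQ]
  ext f
  constructor
  · rintro ⟨hf, u, hu, rfl⟩
    exact ⟨u, ⟨hu, (mem_dualAnnihilator _).1 hf⟩, rfl⟩
  · rintro ⟨u, ⟨hu, hu'⟩, rfl⟩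
    exact ⟨(mem_dualAnnihilator _).2 hu', u, hu, rfl⟩

lemma finiteDimensional_quotient_sup_qPolar (hQ : Q.IsSymm) (U : Submodule ℂ X)
    [FiniteDimensional ℂ (U.map Q)] : FiniteDimensional ℂ (X ⧸ (U ⊔ qPolar Q U)) := by
  refine finite_dualAnnihilator_iff.1 ?_
  rw [dualAnnihilator_sup_qPolar hQ]
  exact finiteDimensional_of_le (Submodule.map_mono inf_le_left)

lemma finrank_quotient_sup_qPolar (hQ : Q.IsSymm) (U : Submodule ℂ X)
    [FiniteDimensional ℂ (U.map Q)] :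
    finrank ℂ (X ⧸ (U ⊔ qPolar Q U)) = finrank ℂ ((U ⊓ qPolar Q U).map Q) := by
  rw [← dualAnnihilator_sup_qPolar hQ, ← (dualQuotEquivDualAnnihilator _).finrank_eq,
    Subspace.dual_finrank_eq]

lemma finiteDimensional_map_qPolar (hQ : Q.IsSymm) (V : Submodule ℂ X)
    [FiniteDimensional ℂ (X ⧸ (V ⊔ qKer Q))] : FiniteDimensional ℂ ((qPolar Q V).map Q) := by
  have hle : (qPolar Q V).map Q ≤ (V ⊔ qKer Q).dualAnnihilator := by
    rintro _ ⟨u, hu, rfl⟩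
    rw [dualAnnihilator_sup_eq]
    exact ⟨(mem_dualAnnihilator _).2 hu,
      (mem_dualAnnihilator _).2 fun k hk => hQ.eq_iff.1 (hk u mem_top)⟩
  have : FiniteDimensional ℂ (V ⊔ qKer Q).dualAnnihilator :=
    finite_dualAnnihilator_iff.2 inferInstance
  exact finiteDimensional_of_le hle

end Duality

section NegativeDefinite

variable {Q : X →ₗ⋆[ℂ] X →ₗ[ℂ] ℂ}

/-- The form `Q` is negative definite on the subspace `W`. The real part is only there to make
sense of the sign: `Q x x` is real for a Hermitian form. -/
def IsNegDefOn (Q : X →ₗ⋆[ℂ] X →ₗ[ℂ] ℂ) (W : Submodule ℂ X) : Prop :=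
  ∀ x ∈ W, x ≠ 0 → (Q x x).re < 0

lemma apply_add_self_of_apply_eq_zero (hQ : Q.IsSymm) {x y : X} (h : Q x y = 0) :
    Q (x + y) (x + y) = Q x x + Q y y := by
  simp [h, hQ.eq_iff.1 h]

lemma re_apply_smul_self (Q : X →ₗ⋆[ℂ] X →ₗ[ℂ] ℂ) (c : ℂ) (x : X) :
    (Q (c • x) (c • x)).re = Complex.normSq c * (Q x x).re := by
  have h : Q (c • x) (c • x) = (Complex.normSq c : ℂ) * Q x x := by
    rw [Complex.normSq_eq_conj_mul_self]
    simp [mul_assoc, mul_left_comm]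
  rw [h, Complex.re_ofReal_mul]

namespace IsNegDefOn

variable {A B V : Submodule ℂ X}

lemma bot : IsNegDefOn Q ⊥ := fun _ hx hx0 => absurd ((mem_bot ℂ).1 hx) hx0

lemma mono (hB : IsNegDefOn Q B) (h : A ≤ B) : IsNegDefOn Q A := fun x hx => hB x (h hx)

lemma re_nonpos (hA : IsNegDefOn Q A) {x : X} (hx : x ∈ A) : (Q x x).re ≤ 0 := by
  obtain rfl | hx0 := eq_or_ne x 0
  · simp
  · exact (hA x hx hx0).le

lemma eq_zero_of_re_nonneg (hA : IsNegDefOn Q A) {x : X} (hx : x ∈ A) (h : 0 ≤ (Q x x).re) :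
    x = 0 :=
  not_imp_comm.1 (hA x hx) h.not_gt

lemma disjoint_of_nonneg (hA : IsNegDefOn Q A) {P : Submodule ℂ X}
    (hP : ∀ x ∈ P, 0 ≤ (Q x x).re) : Disjoint A P :=
  Submodule.disjoint_def.2 fun x hxA hxP => hA.eq_zero_of_re_nonneg hxA (hP x hxP)

lemma disjoint_qPolar (hA : IsNegDefOn Q A) : Disjoint A (qPolar Q A) :=
  Submodule.disjoint_def.2 fun x hx hx' => hA.eq_zero_of_re_nonneg hx (by simp [hx' x hx])

lemma sup_qPolar_eq_top (hA : IsNegDefOn Q A) (hQ : Q.IsSymm) [FiniteDimensional ℂ A] :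
    A ⊔ qPolar Q A = ⊤ := by
  rw [← dualAnnihilator_eq_bot_iff (R := ℂ), dualAnnihilator_sup_qPolar hQ,
    hA.disjoint_qPolar.eq_bot, Submodule.map_bot]

lemma le_sup_inf_qPolar (hA : IsNegDefOn Q A) (hQ : Q.IsSymm) [FiniteDimensional ℂ A]
    (hAV : A ≤ V) : V ≤ A ⊔ V ⊓ qPolar Q A := by
  rw [inf_comm, ← sup_inf_assoc_of_le _ hAV, hA.sup_qPolar_eq_top hQ, top_inf_eq]

lemma span_singleton {x : X} (hx : (Q x x).re < 0) : IsNegDefOn Q (ℂ ∙ x) := by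
  intro y hy hy0
  obtain ⟨c, rfl⟩ := mem_span_singleton.1 hy
  rw [re_apply_smul_self]
  exact mul_neg_of_pos_of_neg (Complex.normSq_pos.2 (left_ne_zero_of_smul hy0)) hx

lemma sup (hA : IsNegDefOn Q A) (hB : IsNegDefOn Q B) (hQ : Q.IsSymm) (hAB : A ≤ qPolar Q B) :
    IsNegDefOn Q (A ⊔ B) := by
  intro x hx hx0
  obtain ⟨a, ha, b, hb, rfl⟩ := mem_sup.1 hx
  rw [apply_add_self_of_apply_eq_zero hQ (hAB ha b hb), Complex.add_re]
  obtain rfl | ha0 := eq_or_ne a 0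
  · simpa using hB b hb (by simpa using hx0)
  · exact add_neg_of_neg_of_nonpos (hA a ha ha0) (hB.re_nonpos hb)

lemma finrank_map (hA : IsNegDefOn Q A) : finrank ℂ (A.map Q) = finrank ℂ A := by
  refine finrank_map_of_injOn (starRingEnd ℂ).injective Q
    (LinearMap.disjoint_ker_iff_injOn.1 (hA.disjoint_of_nonneg fun x hx => ?_))
  simp [LinearMap.mem_ker.1 hx]

end IsNegDefOn

end NegativeDefinite

section MorseIndex

variable {Q : X →ₗ⋆[ℂ] X →ₗ[ℂ] ℂ} {V U : Submodule ℂ X}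

lemma negIdx_eq_iSup (Q : X →ₗ⋆[ℂ] X →ₗ[ℂ] ℂ) (V : Submodule ℂ X) :
    negIdx Q V = ⨆ W : {W : Submodule ℂ X // W ≤ V ∧ FiniteDimensional ℂ W ∧ IsNegDefOn Q W},
      (finrank ℂ W.1 : ℕ∞) := by
  refine congrArg sSup (Set.ext fun k => ⟨?_, ?_⟩)
  · rintro ⟨W, hWV, hW, hneg, rfl⟩
    exact ⟨⟨W, hWV, hW, hneg⟩, rfl⟩
  · rintro ⟨⟨W, hWV, hW, hneg⟩, rfl⟩
    exact ⟨W, hWV, hW, hneg, rfl⟩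

instance nonempty_isNegDefOn (Q : X →ₗ⋆[ℂ] X →ₗ[ℂ] ℂ) (V : Submodule ℂ X) :
    Nonempty {W : Submodule ℂ X // W ≤ V ∧ FiniteDimensional ℂ W ∧ IsNegDefOn Q W} :=
  ⟨⟨⊥, bot_le, inferInstance, .bot⟩⟩

lemma IsNegDefOn.finrank_le_negIdx {W : Submodule ℂ X} [hW : FiniteDimensional ℂ W]
    (hneg : IsNegDefOn Q W) (hWV : W ≤ V) : (finrank ℂ W : ℕ∞) ≤ negIdx Q V :=
  le_sSup ⟨W, hWV, hW, hneg, rfl⟩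

lemma negIdx_le {n : ℕ∞}
    (h : ∀ W ≤ V, FiniteDimensional ℂ W → IsNegDefOn Q W → (finrank ℂ W : ℕ∞) ≤ n) :
    negIdx Q V ≤ n := by
  rw [negIdx_eq_iSup]
  exact iSup_le fun W => h W.1 W.2.1 W.2.2.1 W.2.2.2

lemma negIdx_mono (hVU : V ≤ U) : negIdx Q V ≤ negIdx Q U :=
  negIdx_le fun _ hWV _ hneg => hneg.finrank_le_negIdx (hWV.trans hVU)

lemma exists_finrank_eq_negIdx (hV : negIdx Q V ≠ ⊤) :
    ∃ A ≤ V, FiniteDimensional ℂ A ∧ IsNegDefOn Q A ∧ negIdx Q V = finrank ℂ A := by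
  rw [negIdx_eq_iSup] at hV ⊢
  obtain ⟨⟨A, hAV, hA, hneg⟩, hidx⟩ := ENat.exists_eq_iSup_of_lt_top hV.lt_top
  exact ⟨A, hAV, hA, hneg, hidx.symm⟩

lemma negIdx_add_negIdx_le_negIdx_sup (hQ : Q.IsSymm) (hVU : V ≤ qPolar Q U) :
    negIdx Q V + negIdx Q U ≤ negIdx Q (V ⊔ U) := by
  rw [negIdx_eq_iSup Q V, negIdx_eq_iSup Q U]
  refine ENat.iSup_add_iSup_le ?_
  rintro ⟨A, hAV, hA, hAneg⟩ ⟨B, hBU, hB, hBneg⟩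
  have hAB : A ≤ qPolar Q B := fun a ha b hb => hVU (hAV ha) b (hBU hb)
  have hdisj : Disjoint A B := (hBneg.disjoint_qPolar.mono_right hAB).symm
  have hfin := finrank_sup_add_finrank_inf_eq A B
  rw [hdisj.eq_bot, finrank_bot, add_zero] at hfin
  exact_mod_cast hfin ▸ (hAneg.sup hBneg hQ hAB).finrank_le_negIdx (sup_le_sup hAV hBU)

lemma exists_maximal_isNegDefOn (hQ : Q.IsSymm) (hV : negIdx Q V ≠ ⊤) :
    ∃ A ≤ V, FiniteDimensional ℂ A ∧ IsNegDefOn Q A ∧ negIdx Q V = finrank ℂ A ∧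
      ∀ x ∈ V ⊓ qPolar Q A, 0 ≤ (Q x x).re := by
  obtain ⟨A, hAV, hA, hneg, hidx⟩ := exists_finrank_eq_negIdx hV
  refine ⟨A, hAV, hA, hneg, hidx, fun x ⟨hxV, hxA⟩ => ?_⟩
  by_contra! hx
  have hx0 : x ≠ 0 := by
    rintro rfl
    simp at hx
  have horth : A ≤ qPolar Q (ℂ ∙ x) := (le_qPolar_comm hQ).1 (by simpa using hxA)
  have hlt : (finrank ℂ A + 1 : ℕ∞) ≤ finrank ℂ A :=
    calc (finrank ℂ A + 1 : ℕ∞)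
        = finrank ℂ A + finrank ℂ (ℂ ∙ x) := by rw [finrank_span_singleton hx0, Nat.cast_one]
      _ ≤ negIdx Q A + negIdx Q (ℂ ∙ x) := add_le_add (hneg.finrank_le_negIdx le_rfl)
          ((IsNegDefOn.span_singleton hx).finrank_le_negIdx le_rfl)
      _ ≤ negIdx Q (A ⊔ ℂ ∙ x) := negIdx_add_negIdx_le_negIdx_sup hQ horth
      _ ≤ negIdx Q V := negIdx_mono (sup_le hAV (by simpa using hxV))
      _ = finrank ℂ A := hidx
  norm_cast at hlt
  omega

lemma negIdx_le_finrank_of_le_sup {N P : Submodule ℂ X} [FiniteDimensional ℂ N]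
    (hP : ∀ x ∈ P, 0 ≤ (Q x x).re) (hV : V ≤ N ⊔ P) : negIdx Q V ≤ finrank ℂ N :=
  negIdx_le fun _ hWV _ hneg => Nat.cast_le.2 <|
    finrank_le_of_disjoint_of_le_sup (hneg.disjoint_of_nonneg hP) (hWV.trans hV)

lemma negIdx_sup_le (hQ : Q.IsSymm) (hVU : V ≤ qPolar Q U) :
    negIdx Q (V ⊔ U) ≤ negIdx Q V + negIdx Q U := by
  obtain hV | hV := eq_or_ne (negIdx Q V) ⊤
  · simp [hV]
  obtain hU | hU := eq_or_ne (negIdx Q U) ⊤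
  · simp [hU]
  obtain ⟨A, hAV, _, hA, hAidx, hAnonneg⟩ := exists_maximal_isNegDefOn hQ hV
  obtain ⟨B, hBU, _, hB, hBidx, hBnonneg⟩ := exists_maximal_isNegDefOn hQ hU
  have hnonneg : ∀ x ∈ V ⊓ qPolar Q A ⊔ U ⊓ qPolar Q B, 0 ≤ (Q x x).re := by
    intro x hx
    obtain ⟨v, hv, u, hu, rfl⟩ := mem_sup.1 hx
    rw [apply_add_self_of_apply_eq_zero hQ (hVU hv.1 u hu.1), Complex.add_re]
    exact add_nonneg (hAnonneg v hv) (hBnonneg u hu)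
  have hle : V ⊔ U ≤ (A ⊔ B) ⊔ (V ⊓ qPolar Q A ⊔ U ⊓ qPolar Q B) := by
    rw [sup_sup_sup_comm]
    exact sup_le_sup (hA.le_sup_inf_qPolar hQ hAV) (hB.le_sup_inf_qPolar hQ hBU)
  calc negIdx Q (V ⊔ U) ≤ finrank ℂ ↥(A ⊔ B) := negIdx_le_finrank_of_le_sup hnonneg hle
    _ ≤ negIdx Q V + negIdx Q U := by
      rw [hAidx, hBidx]
      exact_mod_cast finrank_add_le_finrank_add_finrank A B

lemma negIdx_sup (hQ : Q.IsSymm) (hVU : V ≤ qPolar Q U) :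
    negIdx Q (V ⊔ U) = negIdx Q V + negIdx Q U :=
  (negIdx_sup_le hQ hVU).antisymm (negIdx_add_negIdx_le_negIdx_sup hQ hVU)

lemma negIdx_qKer (Q : X →ₗ⋆[ℂ] X →ₗ[ℂ] ℂ) : negIdx Q (qKer Q) = 0 := by
  have hnonneg : ∀ x ∈ qKer Q, 0 ≤ (Q x x).re := fun x hx => by simp [hx x mem_top]
  simpa using negIdx_le_finrank_of_le_sup (N := ⊥) hnonneg le_sup_right

lemma negIdx_top_le_negIdx_add_finrank_quotient (Q : X →ₗ⋆[ℂ] X →ₗ[ℂ] ℂ) (S : Submodule ℂ X)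
    [FiniteDimensional ℂ (X ⧸ S)] : negIdx Q ⊤ ≤ negIdx Q S + finrank ℂ (X ⧸ S) := by
  refine negIdx_le fun W _ _ hneg => ?_
  calc (finrank ℂ W : ℕ∞) ≤ finrank ℂ ↥(W ⊓ S) + finrank ℂ (X ⧸ S) := by
        exact_mod_cast finrank_le_finrank_inf_add_finrank_quotient W S
    _ ≤ negIdx Q S + finrank ℂ (X ⧸ S) :=
        add_le_add_left ((hneg.mono inf_le_left).finrank_le_negIdx inf_le_right) _

end MorseIndex

section Isotropic

variable {Q : X →ₗ⋆[ℂ] X →ₗ[ℂ] ℂ}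

lemma apply_eq_zero_of_re_nonpos (hQ : Q.IsSymm) {P : Submodule ℂ X}
    (hP : ∀ x ∈ P, 0 ≤ (Q x x).re) {x y : X} (hx : x ∈ P) (hy : y ∈ P) (hxx : (Q x x).re ≤ 0) :
    Q x y = 0 := by
  let core : PreInnerProductSpace.Core ℂ P :=
    { inner := fun a b => Q a b
      conj_inner_symm := fun a b => hQ.eq b a
      re_inner_nonneg := fun a => hP a a.2
      add_left := fun a b c => by simp
      smul_left := fun a b r => by simp }
  have hcs : ‖Q x y‖ * ‖Q y x‖ ≤ (Q x x).re * (Q y y).re :=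
    InnerProductSpace.Core.inner_mul_inner_self_le (c := core) (⟨x, hx⟩ : P) ⟨y, hy⟩
  have hsymm : ‖Q y x‖ = ‖Q x y‖ := by rw [← hQ.eq x y, RCLike.norm_conj]
  have hle := hcs.trans (mul_nonpos_of_nonpos_of_nonneg hxx (hP y hy))
  rw [hsymm] at hle
  exact norm_eq_zero.1 (mul_self_eq_zero.1 (hle.antisymm (mul_self_nonneg _)))

lemma finrank_map_le_negIdx_top_of_nonpos (hQ : Q.IsSymm) {N : Submodule ℂ X}
    (hN : ∀ x ∈ N, (Q x x).re ≤ 0) : (finrank ℂ (N.map Q) : ℕ∞) ≤ negIdx Q ⊤ := by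
  obtain htop | htop := eq_or_ne (negIdx Q ⊤) ⊤
  · simp [htop]
  obtain ⟨A, -, _, hA, hidx, hnonneg⟩ := exists_maximal_isNegDefOn hQ htop
  have hker : ∀ n ∈ N, n ∈ qPolar Q A → Q n = 0 := by
    intro n hn hnA
    ext y
    obtain ⟨a, ha, z, hz, rfl⟩ := mem_sup.1 (hA.sup_qPolar_eq_top hQ ▸ mem_top (x := y))
    have hnz : Q n z = 0 :=
      apply_eq_zero_of_re_nonpos hQ hnonneg ⟨mem_top, hnA⟩ ⟨mem_top, hz⟩ (hN n hn)
    simp [hnA a ha, hnz]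
  have hinj : Function.Injective (A.dualRestrict.domRestrict (N.map Q)) := by
    refine (injective_iff_map_eq_zero _).2 ?_
    rintro ⟨_, n, hn, rfl⟩ h
    exact Subtype.ext (hker n hn fun a ha => LinearMap.congr_fun h ⟨a, ha⟩)
  rw [hidx, ← Subspace.dual_finrank_eq (V := A)]
  exact_mod_cast LinearMap.finrank_le_finrank_of_injective hinj

lemma negIdx_add_finrank_map_le_negIdx_top (hQ : Q.IsSymm) {S R : Submodule ℂ X}
    [FiniteDimensional ℂ (R.map Q)] (hR : R ≤ qPolar Q R) (hSR : S ≤ qPolar Q R) :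
    negIdx Q S + finrank ℂ (R.map Q) ≤ negIdx Q ⊤ := by
  rw [negIdx_eq_iSup Q S, ENat.iSup_add]
  refine iSup_le ?_
  rintro ⟨A, hAS, hAfin, hA⟩
  have hAR : A ≤ qPolar Q R := hAS.trans hSR
  have hnonpos : ∀ x ∈ A ⊔ R, (Q x x).re ≤ 0 := by
    intro x hx
    obtain ⟨a, ha, r, hr, rfl⟩ := mem_sup.1 hx
    rw [apply_add_self_of_apply_eq_zero hQ (hAR ha r hr), hR hr r hr, add_zero]
    exact hA.re_nonpos ha
  have hdisj : Disjoint (A.map Q) (R.map Q) := by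
    refine Submodule.disjoint_def.2 ?_
    rintro _ ⟨a, ha, rfl⟩ ⟨r, hr, hra⟩
    have haa : Q a a = 0 := by rw [← hra, hQ.eq_iff, hAR ha r hr]
    rw [hA.eq_zero_of_re_nonneg ha (by simp [haa]), map_zero]
  have hfin := finrank_sup_add_finrank_inf_eq (A.map Q) (R.map Q)
  rw [hdisj.eq_bot, finrank_bot, add_zero, hA.finrank_map, ← Submodule.map_sup] at hfin
  exact_mod_cast hfin ▸ finrank_map_le_negIdx_top_of_nonpos hQ hnonpos

end Isotropic

theorem negIdx_top_eq_negIdx_qPolar_add {Q : X →ₗ⋆[ℂ] X →ₗ[ℂ] ℂ} (hQ : Q.IsSymm)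
    (U : Submodule ℂ X) [FiniteDimensional ℂ (U.map Q)] :
    negIdx Q ⊤ = negIdx Q (qPolar Q U)
      + (finrank ℂ ((U ⊓ qPolar Q U).map Q) + negIdx Q U) := by
  set S := U ⊔ qPolar Q U
  set R := U ⊓ qPolar Q U
  have hRfin : FiniteDimensional ℂ (R.map Q) :=
    finiteDimensional_of_le (Submodule.map_mono inf_le_left)
  have hSfin := finiteDimensional_quotient_sup_qPolar hQ U
  have hSR : S ≤ qPolar Q R :=
    sup_le ((le_qPolar_comm hQ).1 inf_le_right) (qPolar_anti inf_le_left)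
  have hRR : R ≤ qPolar Q R := (inf_le_left.trans le_sup_left).trans hSR
  have hS : negIdx Q ⊤ = negIdx Q S + finrank ℂ (R.map Q) :=
    le_antisymm (finrank_quotient_sup_qPolar hQ U ▸ negIdx_top_le_negIdx_add_finrank_quotient Q S)
      (negIdx_add_finrank_map_le_negIdx_top hQ hRR hSR)
  rw [hS, negIdx_sup hQ ((le_qPolar_comm hQ).1 le_rfl)]
  ring

theorem morse_index_relative_general
    (Q : X →ₗ⋆[ℂ] X →ₗ[ℂ] ℂ)
    (hQ : ∀ x y, (starRingEnd ℂ) (Q x y) = Q y x)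
    (V : Submodule ℂ X) [FiniteDimensional ℂ (X ⧸ (V ⊔ qKer Q))]
    (hVQQ : qPolar Q (qPolar Q V) = V ⊔ qKer Q) :
    negIdx Q ⊤ = negIdx Q V
      + ((Module.finrank ℂ ↥((V ⊓ qPolar Q V).map (qKer Q).mkQ) : ℕ∞)
        + negIdx Q (qPolar Q V)) := by
  have hsymm : Q.IsSymm := ⟨hQ⟩
  have := finiteDimensional_map_qPolar hsymm V
  have hV : negIdx Q (V ⊔ qKer Q) = negIdx Q V := by
    rw [negIdx_sup hsymm ((le_qPolar_comm hsymm).1 (qKer_le_qPolar Q V)), negIdx_qKer, add_zero]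
  have hrad : (qPolar Q V ⊓ (V ⊔ qKer Q)).map Q = (V ⊓ qPolar Q V).map Q := by
    rw [inf_comm, sup_comm, sup_inf_assoc_of_le _ (qKer_le_qPolar Q V), Submodule.map_sup,
      qKer_eq_ker, LinearMap.le_ker_iff_map.1 le_rfl, bot_sup_eq]
  rw [negIdx_top_eq_negIdx_qPolar_add hsymm (qPolar Q V), hVQQ, hV, hrad, qKer_eq_ker,
    finrank_map_mkQ_ker (starRingEnd ℂ).injective]

/-- Abstract relative Morse index theorem:
`m⁻(𝔔) − m⁻(𝔔|_V) = dim((V ∩ V^𝔔 + ker 𝔔)/ker 𝔔) + m⁻(𝔔|_{V^𝔔})`. -/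
theorem morse_index_relative
    (Q : X →ₗ⋆[ℂ] X →ₗ[ℂ] ℂ)
    (hQ : ∀ x y, (starRingEnd ℂ) (Q x y) = Q y x)
    (V : Submodule ℂ X) (hcodim : Module.Finite ℂ (X ⧸ V))
    (hVQQ : qPolar Q (qPolar Q V) = V ⊔ qKer Q)
    (hfin : negIdx Q ⊤ ≠ ⊤)
    (hfin' : negIdx Q (qPolar Q V) ≠ ⊤) :
    negIdx Q ⊤ = negIdx Q V
      + ((Module.finrank ℂ ↥((V ⊓ qPolar Q V).map (qKer Q).mkQ) : ℕ∞)
        + negIdx Q (qPolar Q V)) :=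
  have := Module.Finite.of_surjective _ (factor_surjective (le_sup_left : V ≤ V ⊔ qKer Q))
  morse_index_relative_general Q hQ V hVQQ
end
end

section
/- Let W be a linear subspace of ℝ^n, let 𝔔 be a symmetric bilinear (quadratic) form on W, and suppose ker 𝔔 = K₁ ⊕ K₂ is a direct sum decomposition of its kernel. If X ⊆ W is a subspace such that 𝔔(x,y) = 0 for all x, y ∈ X and X ∩ K₁ = {0}, then dim X ≤ m⁺(𝔔) + dim K₂. -/
open Module

noncomputable section

/-- `m⁺(𝔔)`: the dimension of a maximal subspace on which the symmetric bilinear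
form `Q` is positive definite. -/
def posIdx {W : Type*} [AddCommGroup W] [Module ℝ W]
    (Q : W →ₗ[ℝ] W →ₗ[ℝ] ℝ) : ℕ :=
  sSup {k : ℕ | ∃ P : Submodule ℝ W,
    (∀ x ∈ P, x ≠ 0 → 0 < Q x x) ∧ k = Module.finrank ℝ P}

/-! For a subspace `Y` on which `Q` is nonnegative, counting dimensions against a maximal negative
definite subspace and using `m⁺ + m⁻ + dim ker = dim` gives `dim Y ≤ m⁺ + dim ker`. Adding vectors
of the kernel to `X` does not change the values of `Q`, so this bound applies to `Y = X ⊕ K₁`, and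
`dim ker ≤ dim K₁ + dim K₂` lets `dim K₁` cancel. -/

theorem radical_toQuadraticMap_eq_ker {R M N : Type*} [CommRing R] [Invertible (2 : R)]
    [AddCommGroup M] [AddCommGroup N] [Module R M] [Module R N] {B : LinearMap.BilinMap R M N}
    (hB : ∀ x y, B x y = B y x) : B.toQuadraticMap.radical = LinearMap.ker B := by
  rw [QuadraticMap.radical_eq_ker_associated, QuadraticMap.associated_left_inverse R hB]

theorem posDef_restrict_toQuadraticMap_iff {R M N : Type*} [CommSemiring R]
    [AddCommMonoid M] [AddCommMonoid N] [PartialOrder N] [Module R M] [Module R N]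
    (B : LinearMap.BilinMap R M N) (P : Submodule R M) :
    (B.toQuadraticMap.restrict P).PosDef ↔ ∀ x ∈ P, x ≠ 0 → 0 < B x x := by
  simp [QuadraticMap.PosDef]

theorem posIdx_eq_sigPos {V : Type*} [AddCommGroup V] [Module ℝ V] [FiniteDimensional ℝ V]
    (Q : LinearMap.BilinForm ℝ V) : posIdx Q = sigPos Q.toQuadraticMap := by
  simp only [posIdx, ← posDef_restrict_toQuadraticMap_iff, and_comm, eq_comm (b := finrank ℝ _)]
  exact (sigPos_isGreatest Q.toQuadraticMap).csSup_eq

theorem nonneg_of_mem_sup_of_le_radical {R M N : Type*} [CommRing R] [AddCommGroup M]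
    [AddCommGroup N] [Module R M] [Module R N] [LE N] {Q : QuadraticMap R M N}
    {X K : Submodule R M} (hX : ∀ x ∈ X, 0 ≤ Q x) (hK : K ≤ Q.radical) {y : M} (hy : y ∈ X ⊔ K) :
    0 ≤ Q y := by
  obtain ⟨k, hk, x, hx, rfl⟩ := Submodule.mem_sup.1 (sup_comm X K ▸ hy)
  rw [(QuadraticMap.mem_radical_iff'.1 (hK hk)).2 x]
  exact hX x hx

section QuadraticForm

variable {𝕜 V : Type*} [Field 𝕜] [LinearOrder 𝕜] [IsStrictOrderedRing 𝕜]
  [AddCommGroup V] [Module 𝕜 V] [FiniteDimensional 𝕜 V]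

theorem finrank_le_sigPos_add_finrank_radical_of_nonneg (Q : QuadraticForm 𝕜 V)
    {Y : Submodule 𝕜 V} (hY : ∀ y ∈ Y, 0 ≤ Q y) :
    finrank 𝕜 Y ≤ sigPos Q + finrank 𝕜 Q.radical := by
  have hneg : sigNeg Q + finrank 𝕜 Y ≤ finrank 𝕜 V :=
    QuadraticForm.sigPos_add_finrank_le_of_nonpos (Q := -Q) fun y hy ↦ neg_nonpos.2 (hY y hy)
  have hsig : sigPos Q + sigNeg Q + finrank 𝕜 Q.radical = finrank 𝕜 V :=
    QuadraticForm.sigPos_add_sigNeg_add_radical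
  lia

theorem isotropic_dim_le_split_general (Q : QuadraticForm 𝕜 V) {K₁ K₂ X : Submodule 𝕜 V}
    (hsum : K₁ ⊔ K₂ = Q.radical) (hX : ∀ x ∈ X, 0 ≤ Q x) (hXK : X ⊓ K₁ = ⊥) :
    finrank 𝕜 X ≤ sigPos Q + finrank 𝕜 K₂ := by
  have hK₁ : K₁ ≤ Q.radical := hsum ▸ le_sup_left
  have hnonneg : ∀ y ∈ X ⊔ K₁, 0 ≤ Q y :=
    fun _ ↦ nonneg_of_mem_sup_of_le_radical hX hK₁
  have hadd : finrank 𝕜 ↥(X ⊔ K₁) = finrank 𝕜 X + finrank 𝕜 K₁ := by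
    rw [← Submodule.finrank_sup_add_finrank_inf_eq X K₁, hXK, finrank_bot, add_zero]
  have hsup : finrank 𝕜 ↥(X ⊔ K₁) ≤ sigPos Q + finrank 𝕜 Q.radical :=
    finrank_le_sigPos_add_finrank_radical_of_nonneg Q hnonneg
  have hker : finrank 𝕜 Q.radical ≤ finrank 𝕜 K₁ + finrank 𝕜 K₂ :=
    hsum ▸ Submodule.finrank_add_le_finrank_add_finrank K₁ K₂
  lia

end QuadraticForm

/-- If `ker 𝔔 = K₁ ⊕ K₂` and `X` is a `𝔔`-isotropic subspace with `X ∩ K₁ = 0`,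
then `dim X ≤ m⁺(𝔔) + dim K₂`. -/
theorem isotropic_dim_le_split (n : ℕ) (W : Submodule ℝ (Fin n → ℝ))
    (Q : W →ₗ[ℝ] W →ₗ[ℝ] ℝ) (hQ : ∀ x y, Q x y = Q y x)
    (K₁ K₂ : Submodule ℝ W) (hsum : K₁ ⊔ K₂ = LinearMap.ker Q)
    (hdisj : K₁ ⊓ K₂ = ⊥)
    (X : Submodule ℝ W) (hX : ∀ x ∈ X, ∀ y ∈ X, Q x y = 0)
    (hXK : X ⊓ K₁ = ⊥) :
    Module.finrank ℝ X ≤ posIdx Q + Module.finrank ℝ K₂ := by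
  rw [posIdx_eq_sigPos]
  exact isotropic_dim_le_split_general _
    (hsum.trans (radical_toQuadraticMap_eq_ker hQ).symm) (fun x hx ↦ (hX x hx x hx).ge) hXK
end
end

section
/- Let M ∈ Sp(2n) and let Λ₁, Λ₂, Λ₃ be Lagrangian subspaces of (ℂ^{2n}, ω). Then, computing the left-hand triple index in (ℂ^{2n}⊕ℂ^{2n}, −ω⊕ω) and the right-hand one in (ℂ^{2n}, ω), one has i(Gr(M), Λ₁⊕Λ₂, Λ₁⊕Λ₃) = i(MΛ₁, Λ₂, Λ₃). -/
open Matrix Module Submodule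

noncomputable section

/-- `ℂ^{2n}`, indexed by `Fin n ⊕ Fin n` (the two `n`-blocks). -/
abbrev CV (n : ℕ) := (Fin n ⊕ Fin n) → ℂ

/-- The standard Hermitian inner product `⟨x,y⟩ = ∑ xᵢ conj(yᵢ)`. -/
def herm {m : Type*} [Fintype m] (x y : m → ℂ) : ℂ :=
  ∑ i, x i * (starRingEnd ℂ) (y i)

/-- The standard complex symplectic form `ω(x,y) = ⟨Jx, y⟩` on `ℂ^{2n}`,
where `J = [[0,-I],[I,0]]`. -/
def symForm (n : ℕ) (x y : CV n) : ℂ :=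
  herm ((Matrix.J (Fin n) ℂ).mulVec x) y

/-- The symplectic form `-ω ⊕ ω` on `ℂ^{2n} ⊕ ℂ^{2n}`. -/
def symForm2 (n : ℕ) (p q : CV n × CV n) : ℂ :=
  - symForm n p.1 q.1 + symForm n p.2 q.2

/-- A Lagrangian subspace of a complex symplectic space: `ω` vanishes on it and
it has (half) dimension `m`. -/
def IsLagrangian {X : Type*} [AddCommGroup X] [Module ℂ X]
    (w : X → X → ℂ) (m : ℕ) (Λ : Submodule ℂ X) : Prop :=
  (∀ x ∈ Λ, ∀ y ∈ Λ, w x y = 0) ∧ Module.finrank ℂ Λ = m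

/-- `m⁺(𝔔(α,β;κ))`: the dimension of a maximal subspace of `α ∩ (β + κ)` on which
the form `𝔔(x₁,x₂) = ω(y₁,z₂)` (with `x_j = y_j + z_j`, `y_j ∈ β`, `z_j ∈ κ`) is
positive definite. -/
def posInd {X : Type*} [AddCommGroup X] [Module ℂ X]
    (w : X → X → ℂ) (α β κ : Submodule ℂ X) : ℕ :=
  sSup {k : ℕ | ∃ P : Submodule ℂ X, P ≤ α ⊓ (β ⊔ κ) ∧
    (∀ x ∈ P, x ≠ 0 → ∀ y ∈ β, ∀ z ∈ κ, x = y + z → 0 < (w y z).re) ∧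
    k = Module.finrank ℂ P}

/-- The triple index `i(α,β,κ) = m⁺(𝔔(α,β;κ)) + dim(α∩κ) − dim(α∩β∩κ)`. -/
def tripleIdx {X : Type*} [AddCommGroup X] [Module ℂ X]
    (w : X → X → ℂ) (α β κ : Submodule ℂ X) : ℕ :=
  posInd w α β κ + Module.finrank ℂ ↥(α ⊓ κ) - Module.finrank ℂ ↥(α ⊓ β ⊓ κ)

/-
The second projection carries `Gr(f) ∩ (α ⊕ γ)` onto `f(α) ∩ γ` with kernel `α ∩ ker f`, whatever
`γ` is. Since the first form vanishes on `α`, the form `𝔔` on the graph is the pull-back of the one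
on `f(α)`, so the two have the same positive index: a positive definite subspace upstairs meets the
kernel of the projection trivially, and one downstairs lifts to a complement of that kernel. The two
intersection dimensions of the triple index both exceed those of `f(α)` by `dim (α ∩ ker f)`, which
cancels.
-/

section Graph

variable {R V W : Type*} [Semiring R] [AddCommMonoid V] [Module R V]
  [AddCommMonoid W] [Module R W] (f : V →ₗ[R] W) (α : Submodule R V) (γ : Submodule R W)

theorem graph_inf_prod_eq_map :
    f.graph ⊓ α.prod γ = (α ⊓ γ.comap f).map (LinearMap.id.prod f) := by
  ext ⟨x, y⟩
  constructor
  · rintro ⟨rfl : y = f x, hx : x ∈ α, hfx : f x ∈ γ⟩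
    exact ⟨x, ⟨hx, hfx⟩, rfl⟩
  · rintro ⟨x, ⟨hx, hfx⟩, ⟨⟩⟩
    exact ⟨rfl, hx, hfx⟩

theorem map_snd_graph_inf_prod :
    (f.graph ⊓ α.prod γ).map (LinearMap.snd R V W) = α.map f ⊓ γ := by
  rw [graph_inf_prod_eq_map, ← Submodule.map_comp, LinearMap.snd_prod,
    Submodule.map_inf_eq_map_inf_comap]

end Graph

theorem finrank_map_of_disjoint_ker {R V W : Type*} [Ring R] [AddCommGroup V] [Module R V]
    [AddCommGroup W] [Module R W] (f : V →ₗ[R] W) {P : Submodule R V}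
    (hP : Disjoint P (LinearMap.ker f)) : finrank R (P.map f) = finrank R P := by
  rw [← LinearMap.range_domRestrict]
  exact LinearMap.finrank_range_of_inj (LinearMap.injective_domRestrict_iff.mpr hP)

section RankNullity

variable {K V W : Type*} [DivisionRing K] [AddCommGroup V] [Module K V]
  [AddCommGroup W] [Module K W] (f : V →ₗ[K] W)

theorem finrank_map_add_finrank_inf_ker (P : Submodule K V) [Module.Finite K P] :
    finrank K (P.map f) + finrank K ↥(P ⊓ LinearMap.ker f) = finrank K P := by
  rw [← LinearMap.range_domRestrict, ← Submodule.map_comap_subtype,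
    Submodule.finrank_map_subtype_eq, ← LinearMap.ker_domRestrict]
  exact LinearMap.finrank_range_add_finrank_ker (f.domRestrict P)

theorem exists_le_disjoint_ker_map_eq {E : Submodule K V} {P : Submodule K W}
    (hP : P ≤ E.map f) : ∃ Q ≤ E, Disjoint Q (LinearMap.ker f) ∧ Q.map f = P := by
  set L := E ⊓ P.comap f
  have map_L : L.map f = P := by rw [← Submodule.map_inf_eq_map_inf_comap, inf_eq_right.mpr hP]
  obtain ⟨Q, disjoint_Q, sup_Q⟩ :=
    IsModularLattice.exists_disjoint_and_sup_eq (inf_le_left : L ⊓ LinearMap.ker f ≤ L)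
  have Q_le : Q ≤ L := sup_Q ▸ le_sup_right
  refine ⟨Q, Q_le.trans inf_le_left, ?_, ?_⟩
  · rw [disjoint_iff, ← inf_eq_left.mpr Q_le, inf_assoc, ← disjoint_iff]
    exact disjoint_Q.symm
  · have map_ker : (L ⊓ LinearMap.ker f).map f = ⊥ := LinearMap.le_ker_iff_map.mp inf_le_right
    rw [← map_L, ← sup_Q, Submodule.map_sup, map_ker, bot_sup_eq]

theorem finrank_graph_inf_prod (α : Submodule K V) [Module.Finite K α] (γ : Submodule K W) :
    finrank K ↥(f.graph ⊓ α.prod γ)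
      = finrank K ↥(α.map f ⊓ γ) + finrank K ↥(α ⊓ LinearMap.ker f) := by
  have ker_graph : LinearMap.ker (LinearMap.id.prod f) = ⊥ := by
    rw [LinearMap.ker_prod, LinearMap.ker_id, bot_inf_eq]
  have : Module.Finite K ↥(α ⊓ γ.comap f) := Submodule.finiteDimensional_inf_left _ _
  have inf_ker : α ⊓ γ.comap f ⊓ LinearMap.ker f = α ⊓ LinearMap.ker f := by
    rw [inf_assoc, inf_eq_right.mpr (LinearMap.ker_le_comap f)]
  calc finrank K ↥(f.graph ⊓ α.prod γ)
      = finrank K ↥(α ⊓ γ.comap f) := by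
        rw [graph_inf_prod_eq_map,
          finrank_map_of_disjoint_ker _ (ker_graph ▸ disjoint_bot_right)]
    _ = finrank K ↥(α.map f ⊓ γ) + finrank K ↥(α ⊓ LinearMap.ker f) := by
        rw [← finrank_map_add_finrank_inf_ker f, inf_ker, Submodule.map_inf_eq_map_inf_comap]

end RankNullity

section TripleIndex

variable {X Y : Type*} [AddCommGroup X] [Module ℂ X] [AddCommGroup Y] [Module ℂ Y]

/-- `𝔔(x,x) > 0` for the form `𝔔(·,·) = 𝔔(α,β;κ)` underlying `posInd`. All decompositions of `x`
are tested, so the condition holds vacuously for `x ∉ β + κ`. -/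
def IsPosAt (w : X → X → ℂ) (β κ : Submodule ℂ X) (x : X) : Prop :=
  ∀ y ∈ β, ∀ z ∈ κ, x = y + z → 0 < (w y z).re

theorem not_isPosAt_zero {w : X → X → ℂ} (hw : w 0 0 = 0) (β κ : Submodule ℂ X) :
    ¬ IsPosAt w β κ 0 := fun h => by
  simpa [hw] using h 0 β.zero_mem 0 κ.zero_mem (add_zero 0).symm

theorem posInd_eq_of_map_eq {w : X → X → ℂ} {v : Y → Y → ℂ} {α β κ : Submodule ℂ X}
    {α' β' κ' : Submodule ℂ Y} (hv : v 0 0 = 0) (g : X →ₗ[ℂ] Y)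
    (map_eq : (α ⊓ (β ⊔ κ)).map g = α' ⊓ (β' ⊔ κ'))
    (isPosAt_iff : ∀ x ∈ α ⊓ (β ⊔ κ), IsPosAt w β κ x ↔ IsPosAt v β' κ' (g x)) :
    posInd w α β κ = posInd v α' β' κ' := by
  unfold posInd
  congr 1
  ext k
  constructor
  · rintro ⟨P, P_le, P_pos, rfl⟩
    have disjoint_P : Disjoint P (LinearMap.ker g) := by
      refine Submodule.disjoint_def.mpr fun x hx hgx => by_contra fun hx0 => ?_
      refine not_isPosAt_zero hv β' κ' ?_
      rw [← LinearMap.mem_ker.mp hgx]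
      exact (isPosAt_iff x (P_le hx)).mp (P_pos x hx hx0)
    refine ⟨P.map g, map_eq ▸ Submodule.map_mono P_le, ?_,
      (finrank_map_of_disjoint_ker g disjoint_P).symm⟩
    rintro _ ⟨x, hx, rfl⟩ hgx
    exact (isPosAt_iff x (P_le hx)).mp (P_pos x hx (ne_zero_of_map hgx))
  · rintro ⟨P, P_le, P_pos, rfl⟩
    obtain ⟨Q, Q_le, disjoint_Q, rfl⟩ := exists_le_disjoint_ker_map_eq g (map_eq ▸ P_le)
    refine ⟨Q, Q_le, fun x hx hx0 => ?_, finrank_map_of_disjoint_ker g disjoint_Q⟩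
    have hgx : g x ≠ 0 := fun h => hx0 (Submodule.disjoint_def.mp disjoint_Q x hx h)
    exact (isPosAt_iff x (Q_le hx)).mpr (P_pos (g x) (Submodule.mem_map_of_mem hx) hgx)

/-- The form `-w ⊕ v` on `X ⊕ Y`, which generalizes `symForm2`. -/
def negProdForm (w : X → X → ℂ) (v : Y → Y → ℂ) (p q : X × Y) : ℂ :=
  -w p.1 q.1 + v p.2 q.2

theorem isPosAt_negProdForm_iff {w : X → X → ℂ} (v : Y → Y → ℂ) {α : Submodule ℂ X}
    (hα : ∀ x ∈ α, ∀ y ∈ α, w x y = 0) (β κ : Submodule ℂ Y) {p : X × Y} (hp : p.1 ∈ α) :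
    IsPosAt (negProdForm w v) (α.prod β) (α.prod κ) p ↔ IsPosAt v β κ p.2 := by
  have negProdForm_eq {q r : X × Y} (hq : q.1 ∈ α) (hr : r.1 ∈ α) :
      negProdForm w v q r = v q.2 r.2 := by
    rw [negProdForm, hα _ hq _ hr, neg_zero, zero_add]
  constructor
  · intro h y hy z hz p_eq
    rw [← negProdForm_eq (q := (p.1, y)) (r := (0, z)) hp α.zero_mem]
    exact h (p.1, y) ⟨hp, hy⟩ (0, z) ⟨α.zero_mem, hz⟩ (Prod.ext (add_zero _).symm p_eq)
  · rintro h q ⟨hq₁, hq₂⟩ r ⟨hr₁, hr₂⟩ rfl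
    rw [negProdForm_eq hq₁ hr₁]
    exact h q.2 hq₂ r.2 hr₂ rfl

theorem posInd_graph_eq {w : X → X → ℂ} {v : Y → Y → ℂ} (hv : v 0 0 = 0) (f : X →ₗ[ℂ] Y)
    {α : Submodule ℂ X} (hα : ∀ x ∈ α, ∀ y ∈ α, w x y = 0) (β κ : Submodule ℂ Y) :
    posInd (negProdForm w v) f.graph (α.prod β) (α.prod κ) = posInd v (α.map f) β κ := by
  have sup_prod : α.prod β ⊔ α.prod κ = α.prod (β ⊔ κ) := by
    rw [Submodule.prod_sup_prod, sup_idem]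
  refine posInd_eq_of_map_eq hv (LinearMap.snd ℂ X Y) ?_ fun p hp => ?_
  · rw [sup_prod, map_snd_graph_inf_prod]
  · rw [sup_prod] at hp
    exact isPosAt_negProdForm_iff v hα β κ hp.2.1

theorem tripleIdx_graph_eq_general {w : X → X → ℂ} {v : Y → Y → ℂ} (hv : v 0 0 = 0)
    (f : X →ₗ[ℂ] Y) {α : Submodule ℂ X} [Module.Finite ℂ α]
    (hα : ∀ x ∈ α, ∀ y ∈ α, w x y = 0) (β κ : Submodule ℂ Y) :
    tripleIdx (negProdForm w v) f.graph (α.prod β) (α.prod κ) = tripleIdx v (α.map f) β κ := by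
  have inf_prod : α.prod β ⊓ α.prod κ = α.prod (β ⊓ κ) := by
    rw [Submodule.prod_inf_prod, inf_idem]
  rw [tripleIdx, tripleIdx, inf_assoc f.graph, inf_assoc (α.map f), inf_prod,
    posInd_graph_eq hv f hα, finrank_graph_inf_prod, finrank_graph_inf_prod, ← add_assoc,
    Nat.add_sub_add_right]

end TripleIndex

/-- `i(Gr(M), Λ₁⊕Λ₂, Λ₁⊕Λ₃) = i(MΛ₁, Λ₂, Λ₃)` for `M ∈ Sp(2n)` and Lagrangian
subspaces `Λ₁, Λ₂, Λ₃` of `(ℂ^{2n}, ω)`. -/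
theorem tripleIdx_graph_eq (n : ℕ)
    (M : Matrix (Fin n ⊕ Fin n) (Fin n ⊕ Fin n) ℝ)
    (hM : Mᵀ * Matrix.J (Fin n) ℝ * M = Matrix.J (Fin n) ℝ)
    (Λ₁ Λ₂ Λ₃ : Submodule ℂ (CV n))
    (h₁ : IsLagrangian (symForm n) n Λ₁)
    (h₂ : IsLagrangian (symForm n) n Λ₂)
    (h₃ : IsLagrangian (symForm n) n Λ₃) :
    tripleIdx (symForm2 n)
      (LinearMap.graph ((M.map Complex.ofReal).mulVecLin))
      (Λ₁.prod Λ₂) (Λ₁.prod Λ₃)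
    = tripleIdx (symForm n)
        (Λ₁.map ((M.map Complex.ofReal).mulVecLin)) Λ₂ Λ₃ := by
  exact tripleIdx_graph_eq_general (by simp [symForm, herm]) _ h₁.1 Λ₂ Λ₃
end
end

section
/- Let M ∈ Sp(2n) and let Λ₁, Λ₂, Λ₃ be Lagrangian subspaces of (ℂ^{2n}, ω). Then, computing the left-hand triple index in (ℂ^{2n}⊕ℂ^{2n}, −ω⊕ω) and the right-hand one in (ℂ^{2n}, −ω), one has i(Gr(M), Λ₁⊕Λ₂, Λ₃⊕Λ₂) = i(M⁻¹Λ₂, Λ₁, Λ₃; −ω). -/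
/-!
The embedding `x ↦ (x, M x)` carries `M⁻¹Λ₂ ∩ Λ` onto `Gr(M) ∩ (Λ ⊕ Λ₂)` for every subspace `Λ`,
so all subspaces entering the two indices correspond. In any decomposition of `(x, M x)` along
`Λ₁ ⊕ Λ₂` and `Λ₃ ⊕ Λ₂` both second components lie in `Λ₂`, where `ω` vanishes; hence `𝔔` only sees
the first components, on which the form is `-ω`.
-/

open Matrix Module Submodule

noncomputable section

section Submodule

variable {R X Y : Type*} [Semiring R] [AddCommMonoid X] [AddCommMonoid Y] [Module R X] [Module R Y]

theorem exists_le_map_iff {e : X →ₗ[R] Y} {S : Submodule R X} {p : Submodule R Y → Prop} :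
    (∃ P ≤ S.map e, p P) ↔ ∃ Q ≤ S, p (Q.map e) := by
  refine ⟨fun ⟨P, hP, hp⟩ ↦ ⟨S ⊓ P.comap e, inf_le_left, ?_⟩,
    fun ⟨Q, hQ, hp⟩ ↦ ⟨Q.map e, map_mono hQ, hp⟩⟩
  suffices (S ⊓ P.comap e).map e = P by rwa [this]
  refine le_antisymm (map_le_iff_le_comap.2 inf_le_right) fun y hy ↦ ?_
  obtain ⟨x, hx, rfl⟩ := hP hy
  exact mem_map_of_mem ⟨hx, hy⟩

theorem graph_inf_prod (f : X →ₗ[R] Y) (α : Submodule R X) (β : Submodule R Y) :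
    f.graph ⊓ α.prod β = (β.comap f ⊓ α).map (LinearMap.id.prod f) := by
  rw [LinearMap.graph_eq_range_prod, ← Submodule.map_comap_eq, LinearMap.comap_prod_prod,
    comap_id, inf_comm]

theorem id_prod_injective (f : X →ₗ[R] Y) : Function.Injective (LinearMap.id.prod f) :=
  fun _ _ h ↦ congrArg Prod.fst h

theorem finrank_map_of_injective {e : X →ₗ[R] Y} (he : Function.Injective e)
    (P : Submodule R X) : finrank R (P.map e) = finrank R P :=
  (equivMapOfInjective e he P).finrank_eq.symm

end Submodule

/-- The direct sum `w₁ ⊕ w₂` of two forms, generalizing `symForm2`, which is `(-ω) ⊕ ω`. -/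
def directSumForm {X Y : Type*} (w₁ : X → X → ℂ) (w₂ : Y → Y → ℂ)
    (p q : X × Y) : ℂ :=
  w₁ p.1 q.1 + w₂ p.2 q.2

section TripleIndex

variable {X Y : Type*} [AddCommGroup X] [Module ℂ X] [AddCommGroup Y] [Module ℂ Y]

theorem posInd_eq_of_injective {e : X →ₗ[ℂ] Y} (he : Function.Injective e)
    {w : X → X → ℂ} {w' : Y → Y → ℂ} {α β κ : Submodule ℂ X} {α' β' κ' : Submodule ℂ Y}
    (hmap : α' ⊓ (β' ⊔ κ') = (α ⊓ (β ⊔ κ)).map e)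
    (hpos : ∀ x ∈ α ⊓ (β ⊔ κ), IsPosAt w' β' κ' (e x) ↔ IsPosAt w β κ x) :
    posInd w' α' β' κ' = posInd w α β κ := by
  have pos_map_iff (Q : Submodule ℂ X) (hQ : Q ≤ α ⊓ (β ⊔ κ)) :
      (∀ y ∈ Q.map e, y ≠ 0 → IsPosAt w' β' κ' y) ↔ ∀ x ∈ Q, x ≠ 0 → IsPosAt w β κ x := by
    simp only [mem_map, forall_exists_index, and_imp, forall_apply_eq_imp_iff₂,
      map_ne_zero_iff e he]
    exact forall₂_congr fun x hx ↦ imp_congr_right fun _ ↦ hpos x (hQ hx)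
  refine congrArg sSup (Set.ext fun k ↦ ?_)
  change (∃ P ≤ α' ⊓ (β' ⊔ κ'), (∀ y ∈ P, y ≠ 0 → IsPosAt w' β' κ' y) ∧ k = finrank ℂ P) ↔
    ∃ Q ≤ α ⊓ (β ⊔ κ), (∀ x ∈ Q, x ≠ 0 → IsPosAt w β κ x) ∧ k = finrank ℂ Q
  rw [hmap, exists_le_map_iff]
  refine exists_congr fun Q ↦ and_congr_right fun hQ ↦ ?_
  rw [pos_map_iff Q hQ, finrank_map_of_injective he]

theorem isPosAt_directSumForm_iff {w₁ : X → X → ℂ} {w₂ : Y → Y → ℂ} {α κ : Submodule ℂ X}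
    {β : Submodule ℂ Y} (hβ : ∀ u ∈ β, ∀ v ∈ β, w₂ u v = 0) {x : X} {b : Y} (hb : b ∈ β) :
    IsPosAt (directSumForm w₁ w₂) (α.prod β) (κ.prod β) (x, b) ↔ IsPosAt w₁ α κ x := by
  constructor
  · intro h y hy z hz hxyz
    have hpos := h (y, b) ⟨hy, hb⟩ (z, 0) ⟨hz, β.zero_mem⟩ (by simp [hxyz])
    simpa [directSumForm, hβ b hb 0 β.zero_mem] using hpos
  · rintro h ⟨y, u⟩ ⟨hy, hu⟩ ⟨z, v⟩ ⟨hz, hv⟩ hxyz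
    simpa [directSumForm, hβ u hu v hv] using h y hy z hz (congrArg Prod.fst hxyz)

theorem posInd_graph_prod {w₁ : X → X → ℂ} {w₂ : Y → Y → ℂ} (f : X →ₗ[ℂ] Y)
    (α κ : Submodule ℂ X) {β : Submodule ℂ Y} (hβ : ∀ u ∈ β, ∀ v ∈ β, w₂ u v = 0) :
    posInd (directSumForm w₁ w₂) f.graph (α.prod β) (κ.prod β)
      = posInd w₁ (β.comap f) α κ := by
  refine posInd_eq_of_injective (id_prod_injective f) ?_
    fun x hx ↦ isPosAt_directSumForm_iff hβ hx.1
  rw [prod_sup_prod, sup_idem, graph_inf_prod]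

theorem tripleIdx_graph_eq'_general {w₁ : X → X → ℂ} {w₂ : Y → Y → ℂ} (f : X →ₗ[ℂ] Y)
    (α κ : Submodule ℂ X) {β : Submodule ℂ Y} (hβ : ∀ u ∈ β, ∀ v ∈ β, w₂ u v = 0) :
    tripleIdx (directSumForm w₁ w₂) f.graph (α.prod β) (κ.prod β)
      = tripleIdx w₁ (β.comap f) α κ := by
  have finrank_inf (γ : Submodule ℂ X) :
      finrank ℂ ↥(f.graph ⊓ γ.prod β) = finrank ℂ ↥(β.comap f ⊓ γ) := by
    rw [graph_inf_prod, finrank_map_of_injective (id_prod_injective f)]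
  rw [tripleIdx, tripleIdx, posInd_graph_prod f α κ hβ, inf_assoc, inf_assoc, prod_inf_prod,
    inf_idem, finrank_inf, finrank_inf]

end TripleIndex

/-- `i(Gr(M), Λ₁⊕Λ₂, Λ₃⊕Λ₂) = i(M⁻¹Λ₂, Λ₁, Λ₃; −ω)` for `M ∈ Sp(2n)` and
Lagrangian subspaces `Λ₁, Λ₂, Λ₃` of `(ℂ^{2n}, ω)`; the right-hand triple index
is computed with respect to `−ω`. -/
theorem tripleIdx_graph_eq' (n : ℕ)
    (M : Matrix (Fin n ⊕ Fin n) (Fin n ⊕ Fin n) ℝ)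
    (hM : Mᵀ * Matrix.J (Fin n) ℝ * M = Matrix.J (Fin n) ℝ)
    (Λ₁ Λ₂ Λ₃ : Submodule ℂ (CV n))
    (h₁ : IsLagrangian (symForm n) n Λ₁)
    (h₂ : IsLagrangian (symForm n) n Λ₂)
    (h₃ : IsLagrangian (symForm n) n Λ₃) :
    tripleIdx (symForm2 n)
      (LinearMap.graph ((M.map Complex.ofReal).mulVecLin))
      (Λ₁.prod Λ₂) (Λ₃.prod Λ₂)
    = tripleIdx (fun x y => - symForm n x y)
        (Λ₂.comap ((M.map Complex.ofReal).mulVecLin)) Λ₁ Λ₃ :=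
  tripleIdx_graph_eq'_general (w₁ := fun x y => - symForm n x y) _ Λ₁ Λ₃ h₂.1
end
end

section
/- Let M ∈ Sp(2n) and let Λ₁, Λ₂, Λ₃, Λ₄ be Lagrangian subspaces of (ℂ^{2n}, ω). Then i(Gr(M), Λ₁⊕Λ₂, Λ₃⊕Λ₄) = i(MΛ₁, Λ₂, Λ₄) + i(M⁻¹Λ₄, Λ₁, Λ₃; −ω), and equivalently i(Gr(M), Λ₁⊕Λ₂, Λ₃⊕Λ₄) = i(MΛ₃, Λ₂, Λ₄) + i(M⁻¹Λ₂, Λ₁, Λ₃; −ω), where the left-hand triple indices are computed in (ℂ^{2n}⊕ℂ^{2n}, −ω⊕ω), the indices with argument MΛ in (ℂ^{2n}, ω), and the indices with argument M⁻¹Λ in (ℂ^{2n}, −ω). -/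
open Matrix Module Submodule

noncomputable section

/-!
The triple index satisfies a chain rule `i(α, β, κ) = i(α, β, δ) + i(α, δ, κ)` whenever the
intermediate Lagrangian `δ` is contained in `(β ∩ δ) + (δ ∩ κ)`. Indeed `α ∩ δ` is isotropic for the
Hermitian form `𝔔(α, β; κ)`, its orthogonal in `α ∩ (β + κ)` is the `𝔔`-orthogonal sum of
`α ∩ (β + δ)` and `α ∩ (δ + κ)`, and on these two pieces `𝔔` restricts to `𝔔(α, β; δ)` and
`𝔔(α, δ; κ)`. Passing to the orthogonal of the isotropic subspace `α ∩ δ` lowers `m⁺` by the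
dimension of `α ∩ δ` modulo the radical, and that radical part is `(α ∩ β ∩ δ) + (α ∩ δ ∩ κ)`.

For `α = Gr(M)`, `β = Λ₁ ⊕ Λ₂` and `κ = Λ₃ ⊕ Λ₄` both `δ = Λ₁ ⊕ Λ₄` and `δ = Λ₃ ⊕ Λ₂` qualify.
In each of the resulting indices the two Lagrangians share a factor, on which the form vanishes, so
the projection of the graph to the other factor identifies it with an index there.
-/

/-! ### Orthogonal subspaces -/

section Orthogonal

variable {K V : Type*} [Field K] [AddCommGroup V] [Module K V]
  {I : K →+* K} {B : V →ₛₗ[I] V →ₗ[K] K}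

theorem orthogonalBilin_sup (S T : Submodule K V) :
    (S ⊔ T).orthogonalBilin B = S.orthogonalBilin B ⊓ T.orthogonalBilin B := by
  refine le_antisymm (le_inf (orthogonalBilin_le le_sup_left) (orthogonalBilin_le le_sup_right)) ?_
  rintro x ⟨hS, hT⟩ y hy
  obtain ⟨s, hs, t, ht, rfl⟩ := mem_sup.1 hy
  rw [map_add, LinearMap.add_apply, hS s hs, hT t ht, add_zero]

variable [FiniteDimensional K V]

theorem finrank_le_finrank_inf_orthogonalBilin_add (S C : Submodule K V) :
    finrank K S ≤ finrank K ↥(S ⊓ C.orthogonalBilin B) + finrank K C := by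
  let b := finBasis K C
  let g : S →ₗ[K] Fin (finrank K C) → K := (LinearMap.pi fun i ↦ B (b i)).domRestrict S
  have h_range : finrank K g.range ≤ finrank K C := by
    simpa using g.range.finrank_le
  have h_ker : g.ker.map S.subtype ≤ S ⊓ C.orthogonalBilin B := by
    rintro _ ⟨x, hx, rfl⟩
    have hb : span K (Set.range fun i ↦ (b i : V)) = C := by
      rw [Set.range_comp' Subtype.val b, ← coe_subtype, span_image, b.span_eq, map_subtype_top]
    refine ⟨x.2, fun c hc ↦ ?_⟩
    rw [← hb] at hc
    induction hc using span_induction with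
    | mem c hc =>
      obtain ⟨i, rfl⟩ := hc
      exact congrFun hx i
    | zero => simp
    | add c d _ _ hc hd => rw [map_add, LinearMap.add_apply, hc, hd, add_zero]
    | smul k c _ hc => rw [map_smulₛₗ, LinearMap.smul_apply, hc, smul_zero]
  have h_ker_le := finrank_mono h_ker
  rw [finrank_map_subtype_eq] at h_ker_le
  linarith [g.finrank_range_add_finrank_ker]

theorem finrank_add_finrank_inf_orthogonalBilin_le (hB : B.IsRefl) (U W : Submodule K V) :
    finrank K U + finrank K ↥(W ⊓ U.orthogonalBilin B)
      ≤ finrank K W + finrank K ↥(U ⊓ W.orthogonalBilin B) := by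
  obtain ⟨D, h_disjoint, h_sup⟩ := IsModularLattice.exists_disjoint_and_sup_eq
    (inf_le_left : W ⊓ U.orthogonalBilin B ≤ W)
  have h_orth : U ⊓ D.orthogonalBilin B ≤ U ⊓ W.orthogonalBilin B := by
    conv_rhs => rw [← h_sup, orthogonalBilin_sup]
    exact le_inf inf_le_left <| le_inf (fun u hu x hx ↦ hB _ _ (hx.2 u hu.1)) inf_le_right
  have h_dim := finrank_sup_add_finrank_inf_eq (W ⊓ U.orthogonalBilin B) D
  rw [h_sup, h_disjoint.eq_bot, finrank_bot] at h_dim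
  linarith [finrank_le_finrank_inf_orthogonalBilin_add (B := B) U D, finrank_mono h_orth]

theorem finrank_add_finrank_inf_orthogonalBilin (hB : B.IsRefl) (U W : Submodule K V) :
    finrank K U + finrank K ↥(W ⊓ U.orthogonalBilin B)
      = finrank K W + finrank K ↥(U ⊓ W.orthogonalBilin B) :=
  (finrank_add_finrank_inf_orthogonalBilin_le hB U W).antisymm
    (finrank_add_finrank_inf_orthogonalBilin_le hB W U)

theorem finrank_add_finrank_orthogonalBilin (hB : B.IsRefl) (hB' : B.SeparatingLeft)
    (S : Submodule K V) : finrank K S + finrank K (S.orthogonalBilin B) = finrank K V := by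
  have h_top : (⊤ : Submodule K V).orthogonalBilin B = ⊥ := eq_bot_iff.2 fun x hx ↦
    (mem_bot K).2 <| hB' x fun y ↦ hB y x (hx y trivial)
  have h := finrank_add_finrank_inf_orthogonalBilin hB S ⊤
  rwa [h_top, top_inf_eq, inf_bot_eq, finrank_top, finrank_bot, add_zero] at h

theorem orthogonalBilin_orthogonalBilin (hB : B.IsRefl) (hB' : B.SeparatingLeft)
    (S : Submodule K V) : (S.orthogonalBilin B).orthogonalBilin B = S := by
  refine (eq_of_le_of_finrank_le (le_orthogonalBilin_orthogonalBilin hB) ?_).symm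
  linarith [finrank_add_finrank_orthogonalBilin hB hB' S,
    finrank_add_finrank_orthogonalBilin hB hB' (S.orthogonalBilin B)]

theorem orthogonalBilin_inf (hB : B.IsRefl) (hB' : B.SeparatingLeft) (S T : Submodule K V) :
    (S ⊓ T).orthogonalBilin B = S.orthogonalBilin B ⊔ T.orthogonalBilin B := by
  rw [← orthogonalBilin_orthogonalBilin hB hB' (S.orthogonalBilin B ⊔ T.orthogonalBilin B),
    orthogonalBilin_sup, orthogonalBilin_orthogonalBilin hB hB',
    orthogonalBilin_orthogonalBilin hB hB']

end Orthogonal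

/-! ### The positive index of a Hermitian form -/

section PosIndex

open RCLike

variable {𝕜 E : Type*} [RCLike 𝕜] [AddCommGroup E] [Module 𝕜 E]

/-- The positive index `m⁺(Q|_S)` of the Hermitian form `Q` restricted to the subspace `S`: the
largest dimension of a subspace of `S` on which `Q` is positive definite. -/
def posIndex (Q : E →ₗ⋆[𝕜] E →ₗ[𝕜] 𝕜) (S : Submodule 𝕜 E) : ℕ :=
  sSup {k | ∃ P ≤ S, (∀ x ∈ P, x ≠ 0 → 0 < re (Q x x)) ∧ k = finrank 𝕜 P}

variable {Q : E →ₗ⋆[𝕜] E →ₗ[𝕜] 𝕜}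

theorem apply_eq_zero_of_nonpos (hQ : Q.IsSymm) {N : Submodule 𝕜 E}
    (hN : ∀ x ∈ N, re (Q x x) ≤ 0) {u y : E} (hu : u ∈ N) (hy : y ∈ N) (huu : Q u u = 0) :
    Q u y = 0 := by
  let core : PreInnerProductSpace.Core 𝕜 N :=
    { inner := fun x y ↦ -Q x y
      conj_inner_symm := fun x y ↦ by simp [hQ.eq]
      re_inner_nonneg := fun x ↦ by simpa using hN x x.2
      add_left := fun x y z ↦ by simp [add_comm]
      smul_left := fun x y r ↦ by simp }
  have cauchy_schwarz := InnerProductSpace.Core.inner_mul_inner_self_le (c := core) ⟨u, hu⟩ ⟨y, hy⟩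
  have h : ‖-Q u y‖ * ‖-Q y u‖ ≤ re (-Q u u) * re (-Q y y) := cauchy_schwarz
  rw [← hQ.eq u y, huu] at h
  have h_norm : ‖Q u y‖ * ‖Q u y‖ ≤ 0 := by simpa using h
  simpa using h_norm.antisymm (mul_self_nonneg _)

theorem re_apply_self_add_of_apply_eq_zero (hQ : Q.IsSymm) {x y : E} (h : Q x y = 0) :
    re (Q (x + y) (x + y)) = re (Q x x) + re (Q y y) := by
  simp [h, hQ.isRefl x y h]

theorem pos_sup_of_orthogonal (hQ : Q.IsSymm) {P₁ P₂ : Submodule 𝕜 E}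
    (hP₁ : ∀ x ∈ P₁, x ≠ 0 → 0 < re (Q x x)) (hP₂ : ∀ x ∈ P₂, x ≠ 0 → 0 < re (Q x x))
    (h : ∀ x ∈ P₁, ∀ y ∈ P₂, Q x y = 0) : ∀ x ∈ P₁ ⊔ P₂, x ≠ 0 → 0 < re (Q x x) := by
  intro x hx hx0
  obtain ⟨x₁, hx₁, x₂, hx₂, rfl⟩ := mem_sup.1 hx
  rw [re_apply_self_add_of_apply_eq_zero hQ (h x₁ hx₁ x₂ hx₂)]
  rcases eq_or_ne x₁ 0 with rfl | hx₁0
  · simpa using hP₂ x₂ hx₂ (by simpa using hx0)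
  rcases eq_or_ne x₂ 0 with rfl | hx₂0
  · simpa using hP₁ x₁ hx₁ hx₁0
  · exact add_pos (hP₁ x₁ hx₁ hx₁0) (hP₂ x₂ hx₂ hx₂0)

theorem nonpos_sup_of_orthogonal (hQ : Q.IsSymm) {N₁ N₂ : Submodule 𝕜 E}
    (hN₁ : ∀ x ∈ N₁, re (Q x x) ≤ 0) (hN₂ : ∀ x ∈ N₂, re (Q x x) ≤ 0)
    (h : ∀ x ∈ N₁, ∀ y ∈ N₂, Q x y = 0) : ∀ x ∈ N₁ ⊔ N₂, re (Q x x) ≤ 0 := by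
  intro x hx
  obtain ⟨x₁, hx₁, x₂, hx₂, rfl⟩ := mem_sup.1 hx
  rw [re_apply_self_add_of_apply_eq_zero hQ (h x₁ hx₁ x₂ hx₂)]
  exact add_nonpos (hN₁ x₁ hx₁) (hN₂ x₂ hx₂)

theorem pos_span_singleton {x : E} (hx : 0 < re (Q x x)) :
    ∀ y ∈ 𝕜 ∙ x, y ≠ 0 → 0 < re (Q y y) := by
  intro y hy hy0
  obtain ⟨c, rfl⟩ := mem_span_singleton.1 hy
  have hc : 0 < ‖c‖ := norm_pos_iff.2 (left_ne_zero_of_smul hy0)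
  have h : Q (c • x) (c • x) = (‖c‖ ^ 2 : ℝ) * Q x x := by
    rw [map_smul, LinearMap.map_smulₛₗ₂, smul_eq_mul, smul_eq_mul, ← mul_assoc, mul_conj,
      ofReal_pow]
  rw [h, re_ofReal_mul]
  positivity

variable [FiniteDimensional 𝕜 E]

theorem le_posIndex {S P : Submodule 𝕜 E} (hPS : P ≤ S)
    (hP : ∀ x ∈ P, x ≠ 0 → 0 < re (Q x x)) : finrank 𝕜 P ≤ posIndex Q S := by
  refine le_csSup ⟨finrank 𝕜 E, ?_⟩ ⟨P, hPS, hP, rfl⟩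
  rintro _ ⟨P, -, -, rfl⟩
  exact P.finrank_le

theorem exists_pos_finrank_eq_posIndex (Q : E →ₗ⋆[𝕜] E →ₗ[𝕜] 𝕜) (S : Submodule 𝕜 E) :
    ∃ P ≤ S, (∀ x ∈ P, x ≠ 0 → 0 < re (Q x x)) ∧ finrank 𝕜 P = posIndex Q S := by
  obtain ⟨P, hPS, hP, h⟩ := Nat.sSup_mem
    (s := {k | ∃ P ≤ S, (∀ x ∈ P, x ≠ 0 → 0 < re (Q x x)) ∧ k = finrank 𝕜 P})
    ⟨0, ⊥, bot_le, fun x hx hx0 ↦ (hx0 hx).elim, by simp⟩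
    ⟨finrank 𝕜 E, by rintro _ ⟨P, -, -, rfl⟩; exact P.finrank_le⟩
  exact ⟨P, hPS, hP, h.symm⟩

theorem posIndex_add_finrank_le {S N : Submodule 𝕜 E} (hNS : N ≤ S)
    (hN : ∀ x ∈ N, re (Q x x) ≤ 0) : posIndex Q S + finrank 𝕜 N ≤ finrank 𝕜 S := by
  obtain ⟨P, hPS, hP, h_max⟩ := exists_pos_finrank_eq_posIndex Q S
  have h_inf : P ⊓ N = ⊥ := eq_bot_iff.2 fun x hx ↦
    by_contra fun hx0 ↦ (hP x hx.1 hx0).not_ge (hN x hx.2)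
  have h_dim := finrank_sup_add_finrank_inf_eq P N
  rw [h_inf, finrank_bot] at h_dim
  linarith [finrank_mono (sup_le hPS hNS)]

theorem exists_nonpos_finrank_add_posIndex (hQ : Q.IsSymm) (S : Submodule 𝕜 E) :
    ∃ N ≤ S, (∀ x ∈ N, re (Q x x) ≤ 0) ∧ finrank 𝕜 N + posIndex Q S = finrank 𝕜 S := by
  obtain ⟨P, hPS, hP, h_max⟩ := exists_pos_finrank_eq_posIndex Q S
  have hN : ∀ x ∈ S ⊓ P.orthogonalBilin Q, re (Q x x) ≤ 0 := by
    rintro x ⟨hxS, hxP⟩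
    by_contra! hx
    have h_pos := pos_sup_of_orthogonal hQ hP (pos_span_singleton hx) fun p hp y hy ↦ by
      obtain ⟨c, rfl⟩ := mem_span_singleton.1 hy
      rw [map_smul, hxP p hp, smul_zero]
    have h_le := le_posIndex (sup_le hPS ((span_singleton_le_iff_mem x S).2 hxS)) h_pos
    rw [← h_max] at h_le
    have hxP' : x ∈ P := by
      rw [eq_of_le_of_finrank_le le_sup_left h_le]
      exact mem_sup_right (mem_span_singleton_self x)
    simp [hxP x hxP'] at hx
  refine ⟨S ⊓ P.orthogonalBilin Q, inf_le_left, hN, ?_⟩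
  linarith [finrank_le_finrank_inf_orthogonalBilin_add (B := Q) S P,
    posIndex_add_finrank_le inf_le_left hN]

theorem posIndex_sup_of_orthogonal (hQ : Q.IsSymm) {A₁ A₂ : Submodule 𝕜 E}
    (h : ∀ x ∈ A₁, ∀ y ∈ A₂, Q x y = 0) :
    posIndex Q (A₁ ⊔ A₂) = posIndex Q A₁ + posIndex Q A₂ := by
  obtain ⟨P₁, hPA₁, hP₁, hP₁_max⟩ := exists_pos_finrank_eq_posIndex Q A₁
  obtain ⟨P₂, hPA₂, hP₂, hP₂_max⟩ := exists_pos_finrank_eq_posIndex Q A₂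
  obtain ⟨N₁, hNA₁, hN₁, hN₁_dim⟩ := exists_nonpos_finrank_add_posIndex hQ A₁
  obtain ⟨N₂, hNA₂, hN₂, hN₂_dim⟩ := exists_nonpos_finrank_add_posIndex hQ A₂
  have hP_dim := finrank_sup_add_finrank_inf_eq P₁ P₂
  have hP_inf : P₁ ⊓ P₂ = ⊥ := eq_bot_iff.2 fun x hx ↦ by
    by_contra hx0
    simpa [h x (hPA₁ hx.1) x (hPA₂ hx.2)] using hP₁ x hx.1 hx0
  rw [hP_inf, finrank_bot] at hP_dim
  have h_lower := le_posIndex (sup_le_sup hPA₁ hPA₂) <|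
    pos_sup_of_orthogonal hQ hP₁ hP₂ fun x hx y hy ↦ h x (hPA₁ hx) y (hPA₂ hy)
  have h_upper := posIndex_add_finrank_le (sup_le_sup hNA₁ hNA₂) <|
    nonpos_sup_of_orthogonal hQ hN₁ hN₂ fun x hx y hy ↦ h x (hNA₁ hx) y (hNA₂ hy)
  have hN_inf := finrank_mono (inf_le_inf hNA₁ hNA₂)
  have hN_dim := finrank_sup_add_finrank_inf_eq N₁ N₂
  have hA_dim := finrank_sup_add_finrank_inf_eq A₁ A₂
  linarith

theorem posIndex_add_finrank_inf_orthogonalBilin_le (hQ : Q.IsSymm) (U W : Submodule 𝕜 E) :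
    posIndex Q W + finrank 𝕜 ↥(U ⊓ W.orthogonalBilin Q)
      ≤ posIndex Q (W ⊓ U.orthogonalBilin Q) + finrank 𝕜 U := by
  obtain ⟨P, hPW, hP, hP_max⟩ := exists_pos_finrank_eq_posIndex Q W
  have h_lower := le_posIndex (inf_le_inf_right (U.orthogonalBilin Q) hPW) fun x hx ↦ hP x hx.1
  have h_mono := finrank_mono (inf_le_inf_left U (orthogonalBilin_le (B := Q) hPW))
  linarith [finrank_add_finrank_inf_orthogonalBilin hQ.isRefl U P]

theorem posIndex_inf_orthogonalBilin_add_finrank_le (hQ : Q.IsSymm) {U W : Submodule 𝕜 E}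
    (hUW : U ≤ W) (hU : U ≤ U.orthogonalBilin Q) :
    posIndex Q (W ⊓ U.orthogonalBilin Q) + finrank 𝕜 U
      ≤ posIndex Q W + finrank 𝕜 ↥(U ⊓ W.orthogonalBilin Q) := by
  obtain ⟨N, hNW, hN, hN_dim⟩ := exists_nonpos_finrank_add_posIndex hQ W
  have hU_zero : ∀ u ∈ U, Q u u = 0 := fun u hu ↦ hU hu u hu
  have hN' := nonpos_sup_of_orthogonal hQ (N₁ := N ⊓ U.orthogonalBilin Q) (N₂ := U)
    (fun x hx ↦ hN x hx.1) (fun u hu ↦ by simp [hU_zero u hu])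
    fun x hx u hu ↦ hQ.isRefl u x (hx.2 u hu)
  have h_upper := posIndex_add_finrank_le
    (sup_le (inf_le_inf_right _ hNW) (le_inf hUW hU)) hN'
  have h_radical : N ⊓ U.orthogonalBilin Q ⊓ U ≤ U ⊓ N.orthogonalBilin Q := fun u hu ↦
    ⟨hu.2, fun y hy ↦ hQ.isRefl u y
      (apply_eq_zero_of_nonpos hQ hN hu.1.1 hy (hU_zero u hu.2))⟩
  linarith [finrank_mono h_radical,
    finrank_sup_add_finrank_inf_eq (N ⊓ U.orthogonalBilin Q) U,
    finrank_add_finrank_inf_orthogonalBilin hQ.isRefl N U,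
    finrank_add_finrank_inf_orthogonalBilin hQ.isRefl U W]

theorem posIndex_add_finrank_inf_orthogonalBilin (hQ : Q.IsSymm) {U W : Submodule 𝕜 E}
    (hUW : U ≤ W) (hU : U ≤ U.orthogonalBilin Q) :
    posIndex Q W + finrank 𝕜 ↥(U ⊓ W.orthogonalBilin Q)
      = posIndex Q (W ⊓ U.orthogonalBilin Q) + finrank 𝕜 U :=
  (posIndex_add_finrank_inf_orthogonalBilin_le hQ U W).antisymm
    (posIndex_inf_orthogonalBilin_add_finrank_le hQ hUW hU)

end PosIndex

/-! ### The triple index in a symplectic space -/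

theorem exists_linearMap_add_eq_add {K E : Type*} [Field K] [AddCommGroup E] [Module K E]
    (S T : Submodule K E) :
    ∃ p : E →ₗ[K] E, ∀ s ∈ S, ∀ t ∈ T, ∃ r ∈ S ⊓ T, p (s + t) = s + r := by
  obtain ⟨D, h_disjoint, h_sup⟩ := IsModularLattice.exists_disjoint_and_sup_eq
    (inf_le_right : S ⊓ T ≤ T)
  have hDT : D ≤ T := h_sup ▸ le_sup_right
  have hDS : Disjoint D S := disjoint_iff_inf_le.2 fun x hx ↦
    h_disjoint.le_bot ⟨⟨hx.2, hDT hx.1⟩, hx.1⟩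
  obtain ⟨D', hDD', hD'⟩ := hDS.exists_isCompl
  refine ⟨S.projection D' hD'.symm, fun s hs t ht ↦ ?_⟩
  obtain ⟨r, hr, d, hd, rfl⟩ := mem_sup.1 (h_sup.ge ht)
  refine ⟨r, hr, ?_⟩
  rw [map_add, map_add, projection_apply_of_mem_left _ hs, projection_apply_of_mem_left _ hr.1,
    (projection_apply_eq_zero_iff _).2 (hDD' hd), add_zero]

section Symplectic

variable {V : Type*} [AddCommGroup V] [Module ℂ V]

/-- A complex symplectic form: sesquilinear, linear in the first variable as in the paper,
skew-Hermitian and nondegenerate. -/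
structure IsSymplectic (ω : V →ₗ[ℂ] V →ₗ⋆[ℂ] ℂ) : Prop where
  neg_conj : ∀ x y, -starRingEnd ℂ (ω x y) = ω y x
  separatingLeft : ω.SeparatingLeft

variable {ω : V →ₗ[ℂ] V →ₗ⋆[ℂ] ℂ} {α β δ κ : Submodule ℂ V}

theorem IsSymplectic.isRefl (hω : IsSymplectic ω) : ω.IsRefl := fun x y h ↦ by
  rw [← hω.neg_conj, h, map_zero, neg_zero]

theorem IsSymplectic.flip_isRefl (hω : IsSymplectic ω) : ω.flip.IsRefl :=
  LinearMap.IsRefl.flip_isRefl_iff.2 hω.isRefl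

theorem IsSymplectic.flip_separatingLeft (hω : IsSymplectic ω) : ω.flip.SeparatingLeft :=
  fun x h ↦ hω.separatingLeft x fun y ↦ hω.isRefl y x (h y)

theorem IsSymplectic.orthogonalBilin_flip_eq [FiniteDimensional ℂ V] (hω : IsSymplectic ω) {m : ℕ}
    (hm : finrank ℂ V = 2 * m) {Λ : Submodule ℂ V} (hΛ : IsLagrangian (fun x y ↦ ω x y) m Λ) :
    Λ.orthogonalBilin ω.flip = Λ := by
  have h_iso : Λ ≤ Λ.orthogonalBilin ω.flip := fun x hx y hy ↦ hΛ.1 x hx y hy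
  refine (eq_of_le_of_finrank_le h_iso ?_).symm
  have h := finrank_add_finrank_orthogonalBilin hω.flip_isRefl hω.flip_separatingLeft Λ
  rw [hΛ.2, hm] at h
  rw [hΛ.2]
  linarith

/-- `Q` represents the form `𝔔(α, β; κ)` of the paper: `Q` is Hermitian on the whole space and
`Q x₂ x₁ = 𝔔(x₁, x₂)` on `α ∩ (β + κ)`. The arguments are exchanged because Mathlib's Hermitian
forms are conjugate-linear in the first variable. -/
structure IsTripleForm (ω : V →ₗ[ℂ] V →ₗ⋆[ℂ] ℂ) (α β κ : Submodule ℂ V)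
    (Q : V →ₗ⋆[ℂ] V →ₗ[ℂ] ℂ) : Prop where
  isSymm : Q.IsSymm
  apply_add_add : ∀ y ∈ β, ∀ z ∈ κ, ∀ y' ∈ β, ∀ z' ∈ κ, y + z ∈ α → y' + z' ∈ α →
    Q (y + z) (y' + z') = ω y' z

theorem exists_isTripleForm (hω : ∀ x y, -starRingEnd ℂ (ω x y) = ω y x)
    (hα : α ≤ α.orthogonalBilin ω.flip) (hβ : β ≤ β.orthogonalBilin ω.flip)
    (hκ : κ ≤ κ.orthogonalBilin ω.flip) : ∃ Q, IsTripleForm ω α β κ Q := by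
  obtain ⟨p, hp⟩ := exists_linearMap_add_eq_add β κ
  -- On `α ∩ (β + κ)` isotropy makes `𝔔(x₁, x₂)` equal to `ω (p x₁) x₂` and to `-ω x₁ (p x₂)`;
  -- their mean is Hermitian everywhere.
  refine ⟨(2⁻¹ : ℂ) • (ω ∘ₗ p - ω.compl₂ p).flip, ⟨fun x x' ↦ ?_⟩,
    fun y hy z hz y' hy' z' hz' hx hx' ↦ ?_⟩
  · simp [← hω x (p x'), ← hω (p x) x', map_ofNat]
    ring
  obtain ⟨k, hk, hpx⟩ := hp y hy z hz
  obtain ⟨k', hk', hpx'⟩ := hp y' hy' z' hz'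
  have h_left : ω (p (y' + z')) (y + z) = ω y' z := by
    have hy'y : ω y' y = 0 := hβ hy' y hy
    have hk'y : ω k' y = 0 := hβ hk'.1 y hy
    have hk'z : ω k' z = 0 := hκ hk'.2 z hz
    simp [hpx', hy'y, hk'y, hk'z]
  have h_right : ω (y' + z') (p (y + z)) = -ω y' z := by
    have hy'k : ω y' k = 0 := hβ hy' k hk.1
    have hz'k : ω z' k = 0 := hκ hz' k hk.2
    have hz'z : ω z' z = 0 := hκ hz' z hz
    have h_α : ω (y' + z') (y + z) = 0 := hα hx' _ hx
    simp only [map_add, LinearMap.add_apply, hz'z, add_zero, hpx, hy'k, hz'k] at h_α ⊢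
    linear_combination h_α
  simp only [LinearMap.smul_apply, LinearMap.flip_apply, LinearMap.sub_apply, LinearMap.comp_apply,
    LinearMap.compl₂_apply, h_left, h_right, smul_eq_mul]
  ring

theorem IsTripleForm.posInd_eq_posIndex {Q : V →ₗ⋆[ℂ] V →ₗ[ℂ] ℂ} (hQ : IsTripleForm ω α β κ Q) :
    posInd (fun x y ↦ ω x y) α β κ = posIndex Q (α ⊓ (β ⊔ κ)) := by
  have h_apply : ∀ y ∈ β, ∀ z ∈ κ, y + z ∈ α → Q (y + z) (y + z) = ω y z :=
    fun y hy z hz hx ↦ hQ.apply_add_add y hy z hz y hy z hz hx hx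
  unfold posInd posIndex
  congr! 5 with k P
  refine and_congr_right fun hP ↦ and_congr_left fun _ ↦ forall₃_congr fun x hx _ ↦ ?_
  constructor
  · intro h
    obtain ⟨y, hy, z, hz, rfl⟩ := mem_sup.1 (hP hx).2
    rw [h_apply y hy z hz (hP hx).1]
    exact h y hy z hz rfl
  · rintro h y hy z hz rfl
    rwa [h_apply y hy z hz (hP hx).1] at h

section Intermediate

variable {Q : V →ₗ⋆[ℂ] V →ₗ[ℂ] ℂ}

theorem IsTripleForm.of_le_left (hQ : IsTripleForm ω α β κ Q) (hδ : δ ≤ β ⊓ δ ⊔ δ ⊓ κ)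
    (hβ_iso : β ≤ β.orthogonalBilin ω.flip) (hδ_iso : δ ≤ δ.orthogonalBilin ω.flip) :
    IsTripleForm ω α β δ Q := by
  refine ⟨hQ.isSymm, fun y hy z hz y' hy' z' hz' hx hx' ↦ ?_⟩
  obtain ⟨b, hb, k, hk, rfl⟩ := mem_sup.1 (hδ hz)
  obtain ⟨b', hb', k', hk', rfl⟩ := mem_sup.1 (hδ hz')
  rw [← add_assoc] at hx hx' ⊢
  rw [← add_assoc, hQ.apply_add_add _ (add_mem hy hb.1) _ hk.2 _ (add_mem hy' hb'.1) _ hk'.2 hx hx']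
  have h_δ : ω b' k = 0 := hδ_iso hb'.2 k hk.1
  have h_β : ω y' b = 0 := hβ_iso hy' b hb.1
  simp [h_δ, h_β]

theorem IsTripleForm.of_le_right (hQ : IsTripleForm ω α β κ Q) (hδ : δ ≤ β ⊓ δ ⊔ δ ⊓ κ)
    (hδ_iso : δ ≤ δ.orthogonalBilin ω.flip) (hκ_iso : κ ≤ κ.orthogonalBilin ω.flip) :
    IsTripleForm ω α δ κ Q := by
  refine ⟨hQ.isSymm, fun y hy z hz y' hy' z' hz' hx hx' ↦ ?_⟩
  obtain ⟨b, hb, k, hk, rfl⟩ := mem_sup.1 (hδ hy)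
  obtain ⟨b', hb', k', hk', rfl⟩ := mem_sup.1 (hδ hy')
  rw [add_assoc] at hx hx' ⊢
  rw [add_assoc, hQ.apply_add_add _ hb.1 _ (add_mem hk.2 hz) _ hb'.1 _ (add_mem hk'.2 hz') hx hx']
  have h_δ : ω b' k = 0 := hδ_iso hb'.2 k hk.1
  have h_κ : ω k' z = 0 := hκ_iso hk'.2 z hz
  simp [h_δ, h_κ]

theorem IsTripleForm.apply_eq_zero (hQ : IsTripleForm ω α β κ Q) (hδ : δ ≤ β ⊓ δ ⊔ δ ⊓ κ)
    (hδ_iso : δ ≤ δ.orthogonalBilin ω.flip) {x x' : V} (hx : x ∈ α ⊓ (β ⊔ δ))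
    (hx' : x' ∈ α ⊓ (δ ⊔ κ)) : Q x x' = 0 := by
  have hβδ : β ⊔ δ ≤ β ⊔ δ ⊓ κ := sup_le le_sup_left (hδ.trans (sup_le_sup_right inf_le_left _))
  have hδκ : δ ⊔ κ ≤ β ⊓ δ ⊔ κ := sup_le (hδ.trans (sup_le_sup_left inf_le_right _)) le_sup_right
  obtain ⟨y, hy, z, hz, rfl⟩ := mem_sup.1 (hβδ hx.2)
  obtain ⟨y', hy', z', hz', rfl⟩ := mem_sup.1 (hδκ hx'.2)
  rw [hQ.apply_add_add y hy z hz.2 y' hy'.1 z' hz' hx.1 hx'.1]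
  exact hδ_iso hy'.2 z hz.1

variable [FiniteDimensional ℂ V]

theorem IsTripleForm.inf_orthogonalBilin_eq_sup (hω : IsSymplectic ω) (hQ : IsTripleForm ω α β κ Q)
    (hα : α.orthogonalBilin ω.flip = α) (hδ_orth : δ.orthogonalBilin ω.flip = δ)
    (hκ : κ ≤ κ.orthogonalBilin ω.flip) (hδ : δ ≤ β ⊓ δ ⊔ δ ⊓ κ) :
    α ⊓ (β ⊔ κ) ⊓ (α ⊓ δ).orthogonalBilin Q = α ⊓ (β ⊔ δ) ⊔ α ⊓ (δ ⊔ κ) := by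
  have hδ_le : δ ≤ β ⊔ κ := hδ.trans (sup_le_sup inf_le_left inf_le_right)
  have h_zero {x x' : V} := hQ.apply_eq_zero hδ hδ_orth.ge (x := x) (x' := x')
  apply le_antisymm
  · rintro _ ⟨⟨hx, hx_sup⟩, hx_orth⟩
    obtain ⟨y, hy, z, hz, rfl⟩ := mem_sup.1 hx_sup
    have hz_orth : z ∈ (α ⊓ δ).orthogonalBilin ω.flip := fun u hu ↦ hω.isRefl u z <| by
      obtain ⟨b, hb, k, hk, rfl⟩ := mem_sup.1 (hδ hu.2)
      have h_Q : Q (y + z) (b + k) = ω b z :=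
        hQ.apply_add_add y hy z hz b hb.1 k hk.2 hx hu.1
      have h_κ : ω k z = 0 := hκ hk.2 z hz
      rw [map_add, LinearMap.add_apply, h_κ, add_zero, ← h_Q]
      exact hQ.isSymm.isRefl _ _ (hx_orth _ hu)
    rw [orthogonalBilin_inf hω.flip_isRefl hω.flip_separatingLeft, hα, hδ_orth] at hz_orth
    obtain ⟨a, ha, d, hd, rfl⟩ := mem_sup.1 hz_orth
    rw [add_left_comm, add_comm] at hx ⊢
    refine add_mem_sup ⟨(add_mem_cancel_right ha).1 hx, add_mem_sup hy hd⟩ ⟨ha, ?_⟩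
    rw [← add_sub_cancel_right a d, sup_comm]
    exact sub_mem (mem_sup_left hz) (mem_sup_right hd)
  · refine sup_le (le_inf (inf_le_inf_left _ (sup_le le_sup_left hδ_le)) fun x hx u hu ↦ ?_)
      (le_inf (inf_le_inf_left _ (sup_le hδ_le le_sup_right)) fun x hx u hu ↦ ?_)
    · exact hQ.isSymm.isRefl _ _ (h_zero hx ⟨hu.1, mem_sup_left hu.2⟩)
    · exact h_zero ⟨hu.1, mem_sup_right hu.2⟩ hx

theorem IsTripleForm.radical_eq_sup (hω : IsSymplectic ω) (hQ : IsTripleForm ω α β κ Q)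
    (hα : α.orthogonalBilin ω.flip = α) (hβ : β.orthogonalBilin ω.flip = β)
    (hκ : κ.orthogonalBilin ω.flip = κ) (hβκ : β ⊓ κ ≤ δ) (hδ : δ ≤ β ⊓ δ ⊔ δ ⊓ κ) :
    α ⊓ δ ⊓ (α ⊓ (β ⊔ κ)).orthogonalBilin Q = α ⊓ β ⊓ δ ⊔ α ⊓ δ ⊓ κ := by
  apply le_antisymm
  · rintro _ ⟨⟨hu, huδ⟩, hu_orth⟩
    obtain ⟨b, hb, k, hk, rfl⟩ := mem_sup.1 (hδ huδ)
    have hb_orth : b ∈ (α ⊓ (β ⊔ κ)).orthogonalBilin ω.flip := fun x hx ↦ by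
      obtain ⟨y, hy, z, hz, rfl⟩ := mem_sup.1 hx.2
      have h_β : ω b y = 0 := hβ.ge hb.1 y hy
      have h_Q := hQ.apply_add_add y hy z hz b hb.1 k hk.2 hx.1 hu
      rw [hu_orth _ hx] at h_Q
      simp [h_β, ← h_Q]
    rw [orthogonalBilin_inf hω.flip_isRefl hω.flip_separatingLeft, orthogonalBilin_sup, hα, hβ, hκ]
      at hb_orth
    obtain ⟨a, ha, r, hr, rfl⟩ := mem_sup.1 hb_orth
    have har : a ∈ α ⊓ β ⊓ δ :=
      ⟨⟨ha, (add_mem_cancel_right hr.1).1 hb.1⟩, (add_mem_cancel_right (hβκ hr)).1 hb.2⟩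
    rw [add_assoc] at hu ⊢
    exact add_mem_sup har ⟨⟨(add_mem_cancel_left ha).1 hu, add_mem (hβκ hr) hk.1⟩,
      add_mem hr.2 hk.2⟩
  · refine sup_le (fun u hu ↦ ⟨⟨hu.1.1, hu.2⟩, fun x hx ↦ ?_⟩) fun u hu ↦ ⟨hu.1, fun x hx ↦ ?_⟩
    · obtain ⟨y, hy, z, hz, rfl⟩ := mem_sup.1 hx.2
      have h_Q := hQ.apply_add_add u hu.1.2 0 κ.zero_mem y hy z hz (by simpa using hu.1.1) hx.1
      exact hQ.isSymm.isRefl _ _ (by simpa using h_Q)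
    · obtain ⟨y, hy, z, hz, rfl⟩ := mem_sup.1 hx.2
      have h_Q := hQ.apply_add_add y hy z hz 0 β.zero_mem u hu.2 hx.1 (by simpa using hu.1.1)
      simpa using h_Q

theorem tripleIdx_add_tripleIdx (hω : IsSymplectic ω)
    (hα : α.orthogonalBilin ω.flip = α) (hβ : β.orthogonalBilin ω.flip = β)
    (hδ_orth : δ.orthogonalBilin ω.flip = δ) (hκ : κ.orthogonalBilin ω.flip = κ)
    (hδ : δ ≤ β ⊓ δ ⊔ δ ⊓ κ) :
    tripleIdx (fun x y ↦ ω x y) α β κ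
      = tripleIdx (fun x y ↦ ω x y) α β δ + tripleIdx (fun x y ↦ ω x y) α δ κ := by
  have hδ_le : δ ≤ β ⊔ κ := hδ.trans (sup_le_sup inf_le_left inf_le_right)
  have hβκ : β ⊓ κ ≤ δ := by
    have h := orthogonalBilin_le (B := ω.flip) hδ_le
    rwa [orthogonalBilin_sup, hβ, hκ, hδ_orth] at h
  obtain ⟨Q, hQ⟩ := exists_isTripleForm hω.neg_conj hα.ge hβ.ge hκ.ge
  have h_zero {x x' : V} := hQ.apply_eq_zero hδ hδ_orth.ge (x := x) (x' := x')
  have hU : α ⊓ δ ≤ (α ⊓ δ).orthogonalBilin Q := fun x hx y hy ↦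
    h_zero ⟨hy.1, mem_sup_right hy.2⟩ ⟨hx.1, mem_sup_left hx.2⟩
  have h_reduction := posIndex_add_finrank_inf_orthogonalBilin hQ.isSymm
    (inf_le_inf_left α hδ_le) hU
  rw [hQ.inf_orthogonalBilin_eq_sup hω hα hδ_orth hκ.ge hδ, hQ.radical_eq_sup hω hα hβ hκ hβκ hδ,
    posIndex_sup_of_orthogonal hQ.isSymm fun x hx y hy ↦ h_zero hx hy] at h_reduction
  have h_inf : α ⊓ β ⊓ δ ⊓ (α ⊓ δ ⊓ κ) = α ⊓ β ⊓ κ := le_antisymm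
    (le_inf (inf_le_left.trans inf_le_left) (inf_le_right.trans inf_le_right))
    fun x hx ↦ ⟨⟨hx.1, hβκ ⟨hx.1.2, hx.2⟩⟩, ⟨hx.1.1, hβκ ⟨hx.1.2, hx.2⟩⟩, hx.2⟩
  have h_radical := finrank_sup_add_finrank_inf_eq (α ⊓ β ⊓ δ) (α ⊓ δ ⊓ κ)
  rw [h_inf] at h_radical
  have h_αβδ : finrank ℂ ↥(α ⊓ β ⊓ δ) ≤ finrank ℂ ↥(α ⊓ δ) :=
    finrank_mono (inf_le_inf_right δ inf_le_left)
  have h_αδκ : finrank ℂ ↥(α ⊓ δ ⊓ κ) ≤ finrank ℂ ↥(α ⊓ κ) :=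
    finrank_mono (inf_le_inf_right κ inf_le_left)
  have h_αβκ : finrank ℂ ↥(α ⊓ β ⊓ κ) ≤ finrank ℂ ↥(α ⊓ κ) :=
    finrank_mono (inf_le_inf_right κ inf_le_left)
  unfold tripleIdx
  rw [hQ.posInd_eq_posIndex, (hQ.of_le_left hδ hβ.ge hδ_orth.ge).posInd_eq_posIndex,
    (hQ.of_le_right hδ hδ_orth.ge hκ.ge).posInd_eq_posIndex]
  omega

end Intermediate

end Symplectic

/-! ### Graphs and products of subspaces -/

section Projection

theorem finrank_map_of_disjoint_ker_s9 {K X Y : Type*} [DivisionRing K] [AddCommGroup X] [Module K X]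
    [AddCommGroup Y] [Module K Y] {π : X →ₗ[K] Y} {P : Submodule K X} (h : Disjoint P π.ker) :
    finrank K (P.map π) = finrank K P := by
  rw [← LinearMap.range_domRestrict]
  exact LinearMap.finrank_range_of_inj <|
    (injective_iff_map_eq_zero _).2 fun x hx ↦ Subtype.ext (LinearMap.disjoint_ker.1 h x x.2 hx)

variable {X Y : Type*} [AddCommGroup X] [Module ℂ X] [AddCommGroup Y] [Module ℂ Y]

theorem posInd_eq_of_projection {w : X → X → ℂ} {w' : Y → Y → ℂ} {α β κ : Submodule ℂ X}
    {α' β' κ' : Submodule ℂ Y} (π : X →ₗ[ℂ] Y) (hπ : Disjoint α π.ker)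
    (h_map : ∀ y ∈ β, ∀ z ∈ κ, y + z ∈ α →
      π y ∈ β' ∧ π z ∈ κ' ∧ π (y + z) ∈ α' ∧ w y z = w' (π y) (π z))
    (h_lift : ∀ y' ∈ β', ∀ z' ∈ κ', y' + z' ∈ α' →
      ∃ y ∈ β, ∃ z ∈ κ, y + z ∈ α ∧ π y = y' ∧ π z = z') :
    posInd w α β κ = posInd w' α' β' κ' := by
  unfold posInd
  congr 1
  ext k
  constructor
  · rintro ⟨P, hPα, hP, rfl⟩
    refine ⟨P.map π, ?_, ?_,
      (finrank_map_of_disjoint_ker_s9 (hπ.mono_left (hPα.trans inf_le_left))).symm⟩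
    · rintro _ ⟨x, hx, rfl⟩
      obtain ⟨y, hy, z, hz, rfl⟩ := mem_sup.1 (hPα hx).2
      obtain ⟨hy', hz', hx', -⟩ := h_map y hy z hz (hPα hx).1
      exact ⟨hx', π.map_add y z ▸ add_mem_sup hy' hz'⟩
    · rintro _ ⟨x, hx, rfl⟩ hx0 y' hy' z' hz' hxyz
      obtain ⟨u, hu, v, hv, rfl⟩ := mem_sup.1 (hPα hx).2
      obtain ⟨y, hy, z, hz, hyz, rfl, rfl⟩ :=
        h_lift y' hy' z' hz' (hxyz ▸ (h_map u hu v hv (hPα hx).1).2.2.1)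
      rw [← map_add] at hxyz
      rw [← (h_map y hy z hz hyz).2.2.2]
      exact hP _ hx (fun h ↦ hx0 (by rw [h, map_zero])) y hy z hz <|
        LinearMap.disjoint_ker_iff_injOn.1 hπ (hPα hx).1 hyz hxyz
  · rintro ⟨P', hPα', hP', rfl⟩
    have h_map_eq : (P'.comap π ⊓ (α ⊓ (β ⊔ κ))).map π = P' := by
      refine le_antisymm (map_le_iff_le_comap.2 inf_le_left) fun x' hx' ↦ ?_
      obtain ⟨y', hy', z', hz', rfl⟩ := mem_sup.1 (hPα' hx').2
      obtain ⟨y, hy, z, hz, hyz, rfl, rfl⟩ := h_lift y' hy' z' hz' (hPα' hx').1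
      rw [← map_add] at hx' ⊢
      exact mem_map_of_mem ⟨hx', hyz, add_mem_sup hy hz⟩
    refine ⟨P'.comap π ⊓ (α ⊓ (β ⊔ κ)), inf_le_right, ?_, ?_⟩
    · rintro _ ⟨hx, hxα, -⟩ hx0 y hy z hz rfl
      obtain ⟨hy', hz', -, h_eq⟩ := h_map y hy z hz hxα
      rw [h_eq]
      exact hP' _ hx (fun h ↦ hx0 (LinearMap.disjoint_ker.1 hπ _ hxα h)) _ hy' _ hz' (map_add ..)
    · rw [← finrank_map_of_disjoint_ker_s9 (hπ.mono_left (inf_le_right.trans inf_le_left)), h_map_eq]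

end Projection

section Graph

section Ring

variable {R X Y : Type*} [Ring R] [AddCommGroup X] [Module R X] [AddCommGroup Y] [Module R Y]
  {f : X →ₗ[R] Y}

theorem disjoint_graph_ker_fst (f : X →ₗ[R] Y) : Disjoint f.graph (LinearMap.fst R X Y).ker := by
  refine LinearMap.disjoint_ker.2 ?_
  rintro ⟨x, _⟩ (rfl : _ = f x) (rfl : x = 0)
  rw [map_zero, Prod.mk_zero_zero]

theorem disjoint_graph_ker_snd (hf : Function.Injective f) :
    Disjoint f.graph (LinearMap.snd R X Y).ker := by
  refine LinearMap.disjoint_ker.2 ?_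
  rintro ⟨x, _⟩ (rfl : _ = f x) (hx : f x = 0)
  rw [(map_eq_zero_iff f hf).1 hx, map_zero, Prod.mk_zero_zero]

theorem map_fst_graph_inf_prod (f : X →ₗ[R] Y) (S : Submodule R X) (T : Submodule R Y) :
    (f.graph ⊓ S.prod T).map (LinearMap.fst R X Y) = T.comap f ⊓ S := by
  ext x
  constructor
  · rintro ⟨⟨x, _⟩, ⟨(rfl : _ = f x), hx, hfx⟩, rfl⟩
    exact ⟨hfx, hx⟩
  · rintro ⟨hfx, hx⟩
    exact ⟨(x, f x), ⟨rfl, hx, hfx⟩, rfl⟩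

theorem map_snd_graph_inf_prod_s9 (f : X →ₗ[R] Y) (S : Submodule R X) (T : Submodule R Y) :
    (f.graph ⊓ S.prod T).map (LinearMap.snd R X Y) = S.map f ⊓ T := by
  ext y
  constructor
  · rintro ⟨⟨x, _⟩, ⟨(rfl : _ = f x), hx, hfx⟩, rfl⟩
    exact ⟨mem_map_of_mem hx, hfx⟩
  · rintro ⟨⟨x, hx, rfl⟩, hfx⟩
    exact ⟨(x, f x), ⟨rfl, hx, hfx⟩, rfl⟩

end Ring

section Finrank

variable {K X Y : Type*} [DivisionRing K] [AddCommGroup X] [Module K X] [AddCommGroup Y]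
  [Module K Y] {f : X →ₗ[K] Y}

theorem finrank_graph_inf_prod_s9 (f : X →ₗ[K] Y) (S : Submodule K X) (T : Submodule K Y) :
    finrank K ↥(f.graph ⊓ S.prod T) = finrank K ↥(T.comap f ⊓ S) := by
  rw [← finrank_map_of_disjoint_ker_s9 ((disjoint_graph_ker_fst f).mono_left inf_le_left),
    map_fst_graph_inf_prod]

theorem finrank_graph_inf_prod_of_injective (hf : Function.Injective f) (S : Submodule K X)
    (T : Submodule K Y) : finrank K ↥(f.graph ⊓ S.prod T) = finrank K ↥(S.map f ⊓ T) := by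
  rw [← finrank_map_of_disjoint_ker_s9 ((disjoint_graph_ker_snd hf).mono_left inf_le_left),
    map_snd_graph_inf_prod_s9]

end Finrank

variable {V V' : Type*} [AddCommGroup V] [Module ℂ V] [AddCommGroup V'] [Module ℂ V']
  {ω : V →ₗ[ℂ] V →ₗ⋆[ℂ] ℂ} {ω' : V' →ₗ[ℂ] V' →ₗ⋆[ℂ] ℂ} {f : V →ₗ[ℂ] V'}

/-- The form `-ω ⊕ ω'` on `V × V'`, for which the graph of a symplectic map is Lagrangian. -/
def prodForm (ω : V →ₗ[ℂ] V →ₗ⋆[ℂ] ℂ) (ω' : V' →ₗ[ℂ] V' →ₗ⋆[ℂ] ℂ) :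
    V × V' →ₗ[ℂ] V × V' →ₗ⋆[ℂ] ℂ :=
  -((ω ∘ₗ LinearMap.fst ℂ V V').compl₂ (LinearMap.fst ℂ V V'))
    + (ω' ∘ₗ LinearMap.snd ℂ V V').compl₂ (LinearMap.snd ℂ V V')

theorem prodForm_apply (p q : V × V') : prodForm ω ω' p q = -ω p.1 q.1 + ω' p.2 q.2 := rfl

theorem IsSymplectic.prodForm (hω : IsSymplectic ω) (hω' : IsSymplectic ω') :
    IsSymplectic (prodForm ω ω') where
  neg_conj p q := by
    rw [prodForm_apply, prodForm_apply, ← hω.neg_conj p.1, ← hω'.neg_conj p.2, map_add, map_neg,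
      neg_add]
  separatingLeft p hp := Prod.ext
    (hω.separatingLeft _ fun x ↦ by simpa [prodForm_apply] using hp (x, 0))
    (hω'.separatingLeft _ fun x ↦ by simpa [prodForm_apply] using hp (0, x))

theorem orthogonalBilin_prodForm_flip_prod (Λ : Submodule ℂ V) (Λ' : Submodule ℂ V') :
    (Λ.prod Λ').orthogonalBilin (prodForm ω ω').flip
      = (Λ.orthogonalBilin ω.flip).prod (Λ'.orthogonalBilin ω'.flip) := by
  ext p
  constructor
  · refine fun hp ↦ ⟨fun x hx ↦ ?_, fun x hx ↦ ?_⟩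
    · simpa [prodForm_apply] using hp (x, 0) ⟨hx, Λ'.zero_mem⟩
    · simpa [prodForm_apply] using hp (0, x) ⟨Λ.zero_mem, hx⟩
  · rintro ⟨hp, hp'⟩ q ⟨hq, hq'⟩
    have h_fst : ω p.1 q.1 = 0 := hp _ hq
    have h_snd : ω' p.2 q.2 = 0 := hp' _ hq'
    simp [prodForm_apply, h_fst, h_snd]

theorem injective_of_apply_apply_eq (hω : ω.SeparatingLeft) (hf : ∀ x y, ω' (f x) (f y) = ω x y) :
    Function.Injective f :=
  (injective_iff_map_eq_zero f).2 fun x hx ↦ hω x fun y ↦ by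
    rw [← hf, hx, map_zero, LinearMap.zero_apply]

theorem orthogonalBilin_prodForm_flip_graph (hω' : ω'.SeparatingLeft)
    (hf : ∀ x y, ω' (f x) (f y) = ω x y) (hf_surj : Function.Surjective f) :
    f.graph.orthogonalBilin (prodForm ω ω').flip = f.graph := by
  ext p
  constructor
  · refine fun hp ↦ sub_eq_zero.1 <| hω' _ fun y ↦ ?_
    obtain ⟨x, rfl⟩ := hf_surj y
    have h : -ω p.1 x + ω' p.2 (f x) = 0 := hp (x, f x) rfl
    rw [map_sub, LinearMap.sub_apply, hf]
    linear_combination h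
  · rintro (hp : p.2 = f p.1) q (hq : q.2 = f q.1)
    simp [prodForm_apply, hp, hq, hf]

theorem tripleIdx_graph_prod_prod_left (hf : Function.Injective f) {Λ : Submodule ℂ V}
    (hΛ : Λ ≤ Λ.orthogonalBilin ω.flip) (Λ₂ Λ₄ : Submodule ℂ V') :
    tripleIdx (fun p q ↦ prodForm ω ω' p q) f.graph (Λ.prod Λ₂) (Λ.prod Λ₄)
      = tripleIdx (fun x y ↦ ω' x y) (Λ.map f) Λ₂ Λ₄ := by
  unfold tripleIdx
  rw [inf_assoc, prod_inf_prod, inf_idem, inf_assoc, finrank_graph_inf_prod_of_injective hf,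
    finrank_graph_inf_prod_of_injective hf,
    posInd_eq_of_projection (LinearMap.snd ℂ V V') (disjoint_graph_ker_snd hf)]
  · rintro ⟨a, y⟩ hy ⟨c, z⟩ hz (hyz : y + z = f (a + c))
    have h_iso : ω a c = 0 := hΛ hy.1 c hz.1
    exact ⟨hy.2, hz.2, ⟨a + c, add_mem hy.1 hz.1, hyz.symm⟩, by simp [prodForm_apply, h_iso]⟩
  · rintro y hy z hz ⟨a, ha, hyz⟩
    exact ⟨(a, y), ⟨ha, hy⟩, (0, z), ⟨Λ.zero_mem, hz⟩, by simp [hyz], rfl, rfl⟩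

theorem tripleIdx_graph_prod_prod_right (f : V →ₗ[ℂ] V') (Λ₁ Λ₃ : Submodule ℂ V)
    {Λ : Submodule ℂ V'} (hΛ : Λ ≤ Λ.orthogonalBilin ω'.flip) :
    tripleIdx (fun p q ↦ prodForm ω ω' p q) f.graph (Λ₁.prod Λ) (Λ₃.prod Λ)
      = tripleIdx (fun x y ↦ -ω x y) (Λ.comap f) Λ₁ Λ₃ := by
  unfold tripleIdx
  rw [inf_assoc, prod_inf_prod, inf_idem, inf_assoc, finrank_graph_inf_prod_s9,
    finrank_graph_inf_prod_s9,
    posInd_eq_of_projection (LinearMap.fst ℂ V V') (disjoint_graph_ker_fst f)]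
  · rintro ⟨y, a⟩ hy ⟨z, c⟩ hz (hyz : a + c = f (y + z))
    have h_iso : ω' a c = 0 := hΛ hy.2 c hz.2
    have h_mem : f (y + z) ∈ Λ := hyz ▸ add_mem hy.2 hz.2
    exact ⟨hy.1, hz.1, h_mem, by simp [prodForm_apply, h_iso]⟩
  · intro y hy z hz hyz
    exact ⟨(y, f (y + z)), ⟨hy, hyz⟩, (z, 0), ⟨hz, Λ.zero_mem⟩, by simp, rfl, rfl⟩

theorem tripleIdx_graph_add_general [FiniteDimensional ℂ V]
    (hω : IsSymplectic ω) (hω' : IsSymplectic ω') (hf : ∀ x y, ω' (f x) (f y) = ω x y)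
    (hf_surj : Function.Surjective f) {Λ₁ Λ₃ : Submodule ℂ V} {Λ₂ Λ₄ : Submodule ℂ V'}
    (h₁ : Λ₁.orthogonalBilin ω.flip = Λ₁) (h₂ : Λ₂.orthogonalBilin ω'.flip = Λ₂)
    (h₃ : Λ₃.orthogonalBilin ω.flip = Λ₃) (h₄ : Λ₄.orthogonalBilin ω'.flip = Λ₄) :
    tripleIdx (fun p q ↦ prodForm ω ω' p q) f.graph (Λ₁.prod Λ₂) (Λ₃.prod Λ₄)
      = tripleIdx (fun x y ↦ ω' x y) (Λ₁.map f) Λ₂ Λ₄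
        + tripleIdx (fun x y ↦ -ω x y) (Λ₄.comap f) Λ₁ Λ₃
    ∧ tripleIdx (fun p q ↦ prodForm ω ω' p q) f.graph (Λ₁.prod Λ₂) (Λ₃.prod Λ₄)
      = tripleIdx (fun x y ↦ ω' x y) (Λ₃.map f) Λ₂ Λ₄
        + tripleIdx (fun x y ↦ -ω x y) (Λ₂.comap f) Λ₁ Λ₃ := by
  have hf_inj := injective_of_apply_apply_eq hω.separatingLeft hf
  have : FiniteDimensional ℂ V' := Module.Finite.of_surjective f hf_surj
  have h_graph := orthogonalBilin_prodForm_flip_graph hω'.separatingLeft hf hf_surj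
  have h_prod {Λ : Submodule ℂ V} {Λ' : Submodule ℂ V'} (h : Λ.orthogonalBilin ω.flip = Λ)
      (h' : Λ'.orthogonalBilin ω'.flip = Λ') :
      (Λ.prod Λ').orthogonalBilin (prodForm ω ω').flip = Λ.prod Λ' := by
    rw [orthogonalBilin_prodForm_flip_prod, h, h']
  have h_chain {Λ : Submodule ℂ V} {Λ' : Submodule ℂ V'} (h h') :=
    tripleIdx_add_tripleIdx (hω.prodForm hω') h_graph (h_prod h₁ h₂)
      (h_prod (Λ := Λ) (Λ' := Λ') h h') (h_prod h₃ h₄)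
  constructor
  · rw [h_chain h₁ h₄ (by simp), tripleIdx_graph_prod_prod_left hf_inj h₁.ge,
      tripleIdx_graph_prod_prod_right f _ _ h₄.ge]
  · rw [h_chain h₃ h₂ (by simp), tripleIdx_graph_prod_prod_right f _ _ h₂.ge,
      tripleIdx_graph_prod_prod_left hf_inj h₃.ge, add_comm]

end Graph

/-! ### The standard symplectic space -/

section Standard

theorem symForm_eq_dotProduct (n : ℕ) (x y : CV n) :
    symForm n x y = J (Fin n) ℂ *ᵥ x ⬝ᵥ star y := rfl

/-- `symForm n` as a sesquilinear map. -/
def symplecticForm (n : ℕ) : CV n →ₗ[ℂ] CV n →ₗ⋆[ℂ] ℂ :=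
  LinearMap.mk₂'ₛₗ (RingHom.id ℂ) (starRingEnd ℂ) (symForm n)
    (fun x y z ↦ by simp [symForm_eq_dotProduct, mulVec_add])
    (fun c x y ↦ by simp [symForm_eq_dotProduct, mulVec_smul])
    (fun x y z ↦ by simp [symForm_eq_dotProduct])
    (fun c x y ↦ by simp [symForm_eq_dotProduct])

theorem symplecticForm_apply (n : ℕ) (x y : CV n) :
    symplecticForm n x y = J (Fin n) ℂ *ᵥ x ⬝ᵥ star y := rfl

theorem conjTranspose_J (l R : Type*) [DecidableEq l] [CommRing R] [StarRing R] :
    (J l R)ᴴ = -J l R := by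
  simp [J, fromBlocks_conjTranspose, fromBlocks_neg]

open scoped ComplexOrder in
theorem isSymplectic_symplecticForm (n : ℕ) : IsSymplectic (symplecticForm n) where
  neg_conj x y := by
    rw [symplecticForm_apply, symplecticForm_apply, starRingEnd_apply, ← dotProduct_star,
      star_mulVec, conjTranspose_J, vecMul_neg, dotProduct_neg, neg_neg, dotProduct_comm,
      ← dotProduct_mulVec, dotProduct_comm]
  separatingLeft x hx := by
    have hJx : J (Fin n) ℂ *ᵥ x = 0 := dotProduct_self_star_eq_zero.1 (hx _)
    exact mulVec_injective_of_isUnit ((isUnit_iff_isUnit_det _).2 (isUnit_det_J _ _))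
      (hJx.trans (mulVec_zero _).symm)

theorem symplecticForm_mulVecLin_mulVecLin {n : ℕ} {A : Matrix (Fin n ⊕ Fin n) (Fin n ⊕ Fin n) ℂ}
    (hA : Aᴴ * J (Fin n) ℂ * A = J (Fin n) ℂ) (x y : CV n) :
    symplecticForm n (A.mulVecLin x) (A.mulVecLin y) = symplecticForm n x y := by
  rw [symplecticForm_apply, symplecticForm_apply, mulVecLin_apply, mulVecLin_apply, star_mulVec,
    dotProduct_comm, ← dotProduct_mulVec, mulVec_mulVec, mulVec_mulVec, hA, dotProduct_comm]

theorem conjTranspose_map_ofReal_mul_J_mul {n : ℕ} {M : Matrix (Fin n ⊕ Fin n) (Fin n ⊕ Fin n) ℝ}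
    (hM : Mᵀ * J (Fin n) ℝ * M = J (Fin n) ℝ) :
    (M.map Complex.ofReal)ᴴ * J (Fin n) ℂ * M.map Complex.ofReal = J (Fin n) ℂ := by
  have h := SymplecticGroup.map_mem (SymplecticGroup.mem_iff'.2 hM) Complex.ofRealHom
  have h_conj : (M.map Complex.ofReal)ᴴ = (M.map Complex.ofReal)ᵀ := by
    ext i j
    exact Complex.conj_ofReal _
  rw [h_conj]
  exact SymplecticGroup.mem_iff'.1 h

theorem orthogonalBilin_symplecticForm_flip {n : ℕ} {Λ : Submodule ℂ (CV n)}
    (hΛ : IsLagrangian (symForm n) n Λ) : Λ.orthogonalBilin (symplecticForm n).flip = Λ :=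
  (isSymplectic_symplecticForm n).orthogonalBilin_flip_eq (by simp [two_mul]) hΛ

end Standard

/-- `i(Gr(M), Λ₁⊕Λ₂, Λ₃⊕Λ₄) = i(MΛ₁, Λ₂, Λ₄) + i(M⁻¹Λ₄, Λ₁, Λ₃; −ω)`
`= i(MΛ₃, Λ₂, Λ₄) + i(M⁻¹Λ₂, Λ₁, Λ₃; −ω)` for `M ∈ Sp(2n)` and Lagrangian
subspaces `Λ₁, Λ₂, Λ₃, Λ₄` of `(ℂ^{2n}, ω)`. -/
theorem tripleIdx_graph_add (n : ℕ)
    (M : Matrix (Fin n ⊕ Fin n) (Fin n ⊕ Fin n) ℝ)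
    (hM : Mᵀ * Matrix.J (Fin n) ℝ * M = Matrix.J (Fin n) ℝ)
    (Λ₁ Λ₂ Λ₃ Λ₄ : Submodule ℂ (CV n))
    (h₁ : IsLagrangian (symForm n) n Λ₁)
    (h₂ : IsLagrangian (symForm n) n Λ₂)
    (h₃ : IsLagrangian (symForm n) n Λ₃)
    (h₄ : IsLagrangian (symForm n) n Λ₄) :
    tripleIdx (symForm2 n)
      (LinearMap.graph ((M.map Complex.ofReal).mulVecLin))
      (Λ₁.prod Λ₂) (Λ₃.prod Λ₄)
    = tripleIdx (symForm n) (Λ₁.map ((M.map Complex.ofReal).mulVecLin)) Λ₂ Λ₄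
      + tripleIdx (fun x y => - symForm n x y)
          (Λ₄.comap ((M.map Complex.ofReal).mulVecLin)) Λ₁ Λ₃
    ∧ tripleIdx (symForm2 n)
      (LinearMap.graph ((M.map Complex.ofReal).mulVecLin))
      (Λ₁.prod Λ₂) (Λ₃.prod Λ₄)
    = tripleIdx (symForm n) (Λ₃.map ((M.map Complex.ofReal).mulVecLin)) Λ₂ Λ₄
      + tripleIdx (fun x y => - symForm n x y)
          (Λ₂.comap ((M.map Complex.ofReal).mulVecLin)) Λ₁ Λ₃ := by
  have h_iso := symplecticForm_mulVecLin_mulVecLin (conjTranspose_map_ofReal_mul_J_mul hM)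
  have hω := isSymplectic_symplecticForm n
  have h_surj := LinearMap.surjective_of_injective
    (injective_of_apply_apply_eq hω.separatingLeft h_iso)
  exact tripleIdx_graph_add_general hω hω h_iso h_surj (orthogonalBilin_symplecticForm_flip h₁)
    (orthogonalBilin_symplecticForm_flip h₂) (orthogonalBilin_symplecticForm_flip h₃)
    (orthogonalBilin_symplecticForm_flip h₄)
end
end

section
/- Let V be any complex subspace of Λ_N = Λ^n_N⊕Λ^n_N ⊂ ℂ^{4n}, let V^⊥ be its orthogonal complement inside Λ_N, let 𝒥 = (−J)⊕J, and set Λ_V = 𝒥V^⊥ ⊕ V (a Lagrangian subspace of (ℂ^{4n}, −ω⊕ω)). Then i(Gr(I_{2n}), Λ_V, Λ_D) = n − dim(V^⊥ ∩ Gr(−I_n)), where Gr(−I_n) = {(u, −u) : u ∈ ℂ^n} is viewed as a subspace of Λ_N under the identification Λ_N ≅ ℂ^n⊕ℂ^n. -/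
open Matrix Module Submodule

noncomputable section

/-- `Λ^n_D = ℂ^n ⊕ {0}`, the Dirichlet Lagrangian (second block vanishes). -/
def LnD (n : ℕ) : Submodule ℂ (CV n) :=
  LinearMap.ker (LinearMap.funLeft ℂ ℂ (Sum.inr : Fin n → Fin n ⊕ Fin n))

/-- `Λ^n_N = {0} ⊕ ℂ^n`, the Neumann Lagrangian (first block vanishes). -/
def LnN (n : ℕ) : Submodule ℂ (CV n) :=
  LinearMap.ker (LinearMap.funLeft ℂ ℂ (Sum.inl : Fin n → Fin n ⊕ Fin n))

/-- `Λ_D = Λ^n_D ⊕ Λ^n_D ⊂ ℂ^{4n}`. -/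
def LD (n : ℕ) : Submodule ℂ (CV n × CV n) := (LnD n).prod (LnD n)

/-- `Λ_N = Λ^n_N ⊕ Λ^n_N ⊂ ℂ^{4n}`. -/
def LN (n : ℕ) : Submodule ℂ (CV n × CV n) := (LnN n).prod (LnN n)

/-- The Hermitian inner product on `ℂ^{2n} ⊕ ℂ^{2n}`. -/
def herm2 (n : ℕ) (p q : CV n × CV n) : ℂ := herm p.1 q.1 + herm p.2 q.2

lemma herm_add_right {m : Type*} [Fintype m] (x y z : m → ℂ) :
    herm x (y + z) = herm x y + herm x z := by
  simp [herm, Pi.add_apply, map_add, mul_add, Finset.sum_add_distrib]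

lemma herm_smul_right {m : Type*} [Fintype m] (c : ℂ) (x y : m → ℂ) :
    herm x (c • y) = (starRingEnd ℂ) c * herm x y := by
  simp only [herm, Pi.smul_apply, smul_eq_mul, _root_.map_mul, Finset.mul_sum]
  exact Finset.sum_congr rfl fun i _ => by ring

lemma herm2_add_right (n : ℕ) (x y z : CV n × CV n) :
    herm2 n x (y + z) = herm2 n x y + herm2 n x z := by
  simp only [herm2, Prod.fst_add, Prod.snd_add, herm_add_right]; ring

lemma herm2_smul_right (n : ℕ) (c : ℂ) (x y : CV n × CV n) :
    herm2 n x (c • y) = (starRingEnd ℂ) c * herm2 n x y := by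
  simp only [herm2, Prod.smul_fst, Prod.smul_snd, herm_smul_right]; ring

/-- The orthogonal complement of `V` inside `Λ_N`, with respect to the standard
Hermitian inner product of `ℂ^{4n}`. -/
def perpIn (n : ℕ) (V : Submodule ℂ (CV n × CV n)) : Submodule ℂ (CV n × CV n) where
  carrier := {p | p ∈ LN n ∧ ∀ v ∈ V, herm2 n v p = 0}
  add_mem' := by
    rintro a b ⟨haN, ha⟩ ⟨hbN, hb⟩
    exact ⟨(LN n).add_mem haN hbN, fun v hv => by
      rw [herm2_add_right, ha v hv, hb v hv, add_zero]⟩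
  zero_mem' := ⟨(LN n).zero_mem, fun v hv => by simp [herm2, herm]⟩
  smul_mem' := by
    rintro c p ⟨hpN, hp⟩
    exact ⟨(LN n).smul_mem c hpN, fun v hv => by
      rw [herm2_smul_right, hp v hv, mul_zero]⟩

/-- The map `𝒥 = (−J) ⊕ J` on `ℂ^{2n} ⊕ ℂ^{2n}`. -/
def calJ (n : ℕ) : (CV n × CV n) →ₗ[ℂ] (CV n × CV n) :=
  LinearMap.prodMap (-(Matrix.J (Fin n) ℂ)).mulVecLin (Matrix.J (Fin n) ℂ).mulVecLin

/-- `Gr(−I_n) = {(u,−u) : u ∈ ℂ^n}` viewed inside `Λ_N ≅ ℂ^n ⊕ ℂ^n`. -/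
def grNeg (n : ℕ) : Submodule ℂ (CV n × CV n) where
  carrier := {p | p.1 ∈ LnN n ∧ p.2 = - p.1}
  add_mem' := by
    rintro a b ⟨ha1, ha2⟩ ⟨hb1, hb2⟩
    refine ⟨(LnN n).add_mem ha1 hb1, ?_⟩
    simp only [Prod.fst_add, Prod.snd_add, ha2, hb2]
    abel
  zero_mem' := ⟨(LnN n).zero_mem, by simp⟩
  smul_mem' := by
    rintro c p ⟨h1, h2⟩
    exact ⟨(LnN n).smul_mem c h1, by simp only [Prod.smul_fst, Prod.smul_snd, h2, smul_neg]⟩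

/-!
Write `ℂ^{4n} = Λ_N ⊕ Λ_D`. Both projections preserve the diagonal, and all of `𝒥V^⊥` lies in
`Λ_D`. Hence if `u + v + z` is diagonal with `u ∈ 𝒥V^⊥`, `v ∈ V`, `z ∈ Λ_D`, then `v` itself is
diagonal, and `𝔔 = Ω(u + v, z) = Ω(v, z) = Ω(v, u + v + z) = 0` for `Ω = -ω ⊕ ω`, because `Λ_D`, `V`
and the diagonal are isotropic and `Ω(v, 𝒥p) = ⟨v, p⟩ = 0` for `p ∈ V^⊥`. So `m⁺(𝔔) = 0` and only
dimensions remain: the diagonal meets `Λ_D` in dimension `n`, `Λ_V ∩ Λ_D = 𝒥V^⊥` by the modular law,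
and, for `p ∈ Λ_N`, `𝒥p` is diagonal exactly when `p ∈ Gr(−I_n)`.
-/

section General

variable {X : Type*} [AddCommGroup X] [Module ℂ X] {α β κ : Submodule ℂ X}

/-- Isotropic subspaces of a complex symplectic space: those on which the form, given as a bare
function as in `IsLagrangian`, vanishes identically. -/
def IsIsotropic (w : X → X → ℂ) (Λ : Submodule ℂ X) : Prop :=
  ∀ x ∈ Λ, ∀ y ∈ Λ, w x y = 0

lemma IsIsotropic.mono {w : X → X → ℂ} {Λ Λ' : Submodule ℂ X} (h : IsIsotropic w Λ')
    (hle : Λ ≤ Λ') : IsIsotropic w Λ :=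
  fun x hx y hy => h x (hle hx) y (hle hy)

lemma posInd_eq_zero_of_re_nonpos {w : X → X → ℂ}
    (h : ∀ y ∈ β, ∀ z ∈ κ, y + z ∈ α → (w y z).re ≤ 0) : posInd w α β κ = 0 := by
  refine Nat.le_zero.1 (csSup_le' ?_)
  rintro _ ⟨P, hP, hpos, rfl⟩
  suffices hbot : P = ⊥ by rw [hbot, finrank_bot]
  refine (Submodule.eq_bot_iff P).2 fun x hx => by_contra fun hx0 => ?_
  obtain ⟨hxα, hxsup⟩ := hP hx
  obtain ⟨y, hy, z, hz, rfl⟩ := Submodule.mem_sup.1 hxsup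
  exact (h y hy z hz hxα).not_gt (hpos _ hx hx0 y hy z hz rfl)

variable {B : X →ₗ[ℂ] X →ₗ⋆[ℂ] ℂ} {U V : Submodule ℂ X}

-- `hVα` says that an element of `α ∩ (V + κ)` has its `V`-component in `α`; since `U ≤ κ`, this
-- applies to every element on which the form `𝔔(α, U + V; κ)` is defined.
lemma form_eq_zero_of_add_mem (hα : IsIsotropic (B · ·) α) (hκ : IsIsotropic (B · ·) κ)
    (hV : IsIsotropic (B · ·) V) (hUκ : U ≤ κ) (hVU : ∀ v ∈ V, ∀ u ∈ U, B v u = 0)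
    (hVα : V ⊓ (α ⊔ κ) ≤ α) {y z : X} (hy : y ∈ U ⊔ V) (hz : z ∈ κ) (hyz : y + z ∈ α) :
    B y z = 0 := by
  obtain ⟨u, hu, v, hv, rfl⟩ := Submodule.mem_sup.1 hy
  have hv_sup : v ∈ α ⊔ κ := by
    have hv_eq : v = (u + v + z) + -(u + z) := by abel
    rw [hv_eq]
    exact Submodule.add_mem_sup hyz (neg_mem (add_mem (hUκ hu) hz))
  have hvα : v ∈ α := hVα ⟨hv, hv_sup⟩
  have hvx : B v (u + v + z) = 0 := hα v hvα _ hyz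
  have huz : B u z = 0 := hκ u (hUκ hu) z hz
  have hvv : B v v = 0 := hV v hv v hv
  calc B (u + v) z = B v z := by rw [map_add, LinearMap.add_apply, huz, zero_add]
    _ = B v (u + v + z) := by rw [map_add, map_add, hVU v hv u hu, hvv, zero_add, zero_add]
    _ = 0 := hvx

theorem tripleIdx_sup_eq_finrank_sub (hα : IsIsotropic (B · ·) α) (hκ : IsIsotropic (B · ·) κ)
    (hV : IsIsotropic (B · ·) V) (hUκ : U ≤ κ) (hVU : ∀ v ∈ V, ∀ u ∈ U, B v u = 0)
    (hVα : V ⊓ (α ⊔ κ) ≤ α) (hVκ : Disjoint V κ) :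
    tripleIdx (B · ·) α (U ⊔ V) κ = finrank ℂ ↥(α ⊓ κ) - finrank ℂ ↥(α ⊓ U) := by
  have hpos : posInd (B · ·) α (U ⊔ V) κ = 0 :=
    posInd_eq_zero_of_re_nonpos fun y hy z hz hyz => by
      rw [form_eq_zero_of_add_mem hα hκ hV hUκ hVU hVα hy hz hyz, Complex.zero_re]
  have hinf : (U ⊔ V) ⊓ κ = U := by
    rw [sup_inf_assoc_of_le V hUκ, hVκ.eq_bot, sup_bot_eq]
  rw [tripleIdx, hpos, inf_assoc, hinf, zero_add]

end General

section Diagonal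

variable {R M : Type*} [Semiring R] [AddCommMonoid M] [Module R M]

lemma mem_graph_id_iff {p : M × M} :
    p ∈ (LinearMap.id : M →ₗ[R] M).graph ↔ p.1 = p.2 := by
  rw [LinearMap.mem_graph_iff, LinearMap.id_apply, eq_comm]

lemma finrank_graph_id_inf_prod (E : Submodule R M) :
    finrank R ↥((LinearMap.id : M →ₗ[R] M).graph ⊓ E.prod E) = finrank R E := by
  let diag : M →ₗ[R] M × M := LinearMap.id.prod LinearMap.id
  have hdiag : Function.Injective diag := fun x y h => congrArg Prod.fst h
  have hmap : (LinearMap.id : M →ₗ[R] M).graph ⊓ E.prod E = E.map diag := by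
    ext ⟨x, y⟩
    simp only [Submodule.mem_inf, mem_graph_id_iff, Submodule.mem_prod, Submodule.mem_map]
    constructor
    · rintro ⟨rfl, hx, -⟩
      exact ⟨x, hx, rfl⟩
    · rintro ⟨e, he, hxy⟩
      obtain ⟨rfl, rfl⟩ := Prod.ext_iff.1 hxy
      exact ⟨rfl, he, he⟩
  rw [hmap, ← (Submodule.equivMapOfInjective diag hdiag E).finrank_eq]

lemma prod_inf_graph_id_sup_prod_le {R M : Type*} [Ring R] [AddCommGroup M] [Module R M]
    {E F : Submodule R M} (h : Disjoint F E) :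
    F.prod F ⊓ ((LinearMap.id : M →ₗ[R] M).graph ⊔ E.prod E) ≤ LinearMap.graph LinearMap.id := by
  rintro p ⟨⟨hp₁, hp₂⟩, hp⟩
  obtain ⟨a, ha, e, ⟨he₁, he₂⟩, rfl⟩ := Submodule.mem_sup.1 hp
  rw [mem_graph_id_iff] at ha ⊢
  have hdiff : (a + e).1 - (a + e).2 = e.1 - e.2 := by
    rw [Prod.fst_add, Prod.snd_add, ha, add_sub_add_left_eq_sub]
  exact sub_eq_zero.1 <| Submodule.disjoint_def.1 h _ (sub_mem hp₁ hp₂)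
    (hdiff ▸ sub_mem he₁ he₂)

end Diagonal

section Forms

variable {m : Type*} [Fintype m]

lemma herm_add_left (x y z : m → ℂ) : herm (x + y) z = herm x z + herm y z :=
  add_dotProduct x y (star z)

lemma herm_smul_left (c : ℂ) (x y : m → ℂ) : herm (c • x) y = c * herm x y :=
  smul_dotProduct c x (star y)

lemma herm_neg_right (x y : m → ℂ) : herm x (-y) = -herm x y := by
  rw [← neg_one_smul ℂ, herm_smul_right, map_neg, map_one, neg_one_mul]

lemma J_mulVec {l R : Type*} [Fintype l] [DecidableEq l] [CommRing R] (x : l ⊕ l → R) :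
    Matrix.J l R *ᵥ x = Sum.elim (-(x ∘ Sum.inr)) (x ∘ Sum.inl) := by
  simp only [Matrix.J, fromBlocks_mulVec, zero_mulVec, one_mulVec, neg_mulVec, zero_add, add_zero]

lemma J_mulVec_injective (l R : Type*) [Fintype l] [DecidableEq l] [CommRing R] :
    Function.Injective (Matrix.J l R).mulVec :=
  mulVec_injective_of_isUnit ((isUnit_iff_isUnit_det _).2 (isUnit_det_J l R))

lemma herm_J_mulVec [DecidableEq m] (x y : m ⊕ m → ℂ) :
    herm (Matrix.J m ℂ *ᵥ x) (Matrix.J m ℂ *ᵥ y) = herm x y := by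
  simp [herm, J_mulVec, add_comm]

variable {n : ℕ}

lemma symForm_apply (x y : CV n) :
    symForm n x y = herm (x ∘ Sum.inl) (y ∘ Sum.inr) - herm (x ∘ Sum.inr) (y ∘ Sum.inl) := by
  simp [symForm, herm, J_mulVec, neg_add_eq_sub]

lemma isIsotropic_LnD : IsIsotropic (symForm n) (LnD n) := by
  intro x (hx : x ∘ Sum.inr = 0) y (hy : y ∘ Sum.inr = 0)
  rw [symForm_apply, hx, hy]
  simp [herm]

lemma isIsotropic_LnN : IsIsotropic (symForm n) (LnN n) := by
  intro x (hx : x ∘ Sum.inl = 0) y (hy : y ∘ Sum.inl = 0)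
  rw [symForm_apply, hx, hy]
  simp [herm]

lemma disjoint_LnN_LnD : Disjoint (LnN n) (LnD n) := by
  refine Submodule.disjoint_def.2 fun x hxN hxD => funext ?_
  rintro (i | i)
  · exact congrFun hxN i
  · exact congrFun hxD i

lemma finrank_LnD : finrank ℂ (LnD n) = n := by
  have hrank := LinearMap.finrank_range_add_finrank_ker
    (LinearMap.funLeft ℂ ℂ (Sum.inr : Fin n → Fin n ⊕ Fin n))
  rw [LinearMap.range_eq_top.2 (LinearMap.funLeft_surjective_of_injective ℂ ℂ _
    Sum.inr_injective), finrank_top, finrank_fin_fun, finrank_fintype_fun_eq_card,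
    Fintype.card_sum, Fintype.card_fin] at hrank
  exact Nat.add_left_cancel hrank

/-- The form `-ω ⊕ ω` bundled as a sesquilinear map, conjugate-linear in the second argument. -/
def symForm2Sesq (n : ℕ) : (CV n × CV n) →ₗ[ℂ] (CV n × CV n) →ₗ⋆[ℂ] ℂ :=
  LinearMap.mk₂'ₛₗ (RingHom.id ℂ) (starRingEnd ℂ) (symForm2 n)
    (fun p p' q => by
      simp only [symForm2, symForm, Prod.fst_add, Prod.snd_add, mulVec_add, herm_add_left]; ring)
    (fun c p q => by
      simp only [symForm2, symForm, Prod.smul_fst, Prod.smul_snd, mulVec_smul, herm_smul_left,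
        RingHom.id_apply, smul_eq_mul]
      ring)
    (fun p q q' => by
      simp only [symForm2, symForm, Prod.fst_add, Prod.snd_add, herm_add_right]; ring)
    (fun c p q => by
      simp only [symForm2, symForm, Prod.smul_fst, Prod.smul_snd, herm_smul_right, smul_eq_mul]
      ring)

lemma IsIsotropic.symForm2_prod {E F : Submodule ℂ (CV n)} (hE : IsIsotropic (symForm n) E)
    (hF : IsIsotropic (symForm n) F) : IsIsotropic (symForm2 n) (E.prod F) := by
  rintro p ⟨hp₁, hp₂⟩ q ⟨hq₁, hq₂⟩
  rw [symForm2, hE _ hp₁ _ hq₁, hF _ hp₂ _ hq₂, neg_zero, zero_add]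

lemma isIsotropic_graph_id :
    IsIsotropic (symForm2 n) (LinearMap.id : CV n →ₗ[ℂ] CV n).graph := by
  intro p hp q hq
  rw [symForm2, mem_graph_id_iff.1 hp, mem_graph_id_iff.1 hq, neg_add_cancel]

end Forms

section CalJ

variable {n : ℕ}

lemma calJ_apply (p : CV n × CV n) :
    calJ n p = (-(Matrix.J (Fin n) ℂ *ᵥ p.1), Matrix.J (Fin n) ℂ *ᵥ p.2) :=
  Prod.ext (neg_mulVec p.1 _) rfl

lemma calJ_injective : Function.Injective (calJ n) := by
  intro p q h
  simp only [calJ_apply, Prod.mk.injEq, neg_inj] at h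
  exact Prod.ext (J_mulVec_injective _ _ h.1) (J_mulVec_injective _ _ h.2)

lemma symForm2_calJ (p q : CV n × CV n) : symForm2 n p (calJ n q) = herm2 n p q := by
  rw [symForm2, symForm, symForm, calJ_apply, herm_neg_right, herm_J_mulVec, herm_J_mulVec, neg_neg,
    herm2]

lemma J_mulVec_mem_LnD {x : CV n} (hx : x ∈ LnN n) : Matrix.J (Fin n) ℂ *ᵥ x ∈ LnD n := by
  change (Matrix.J (Fin n) ℂ *ᵥ x) ∘ Sum.inr = 0
  rw [J_mulVec, Sum.elim_comp_inr]
  exact hx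

lemma map_calJ_perpIn_le_LD (V : Submodule ℂ (CV n × CV n)) :
    (perpIn n V).map (calJ n) ≤ LD n := by
  rintro _ ⟨p, ⟨⟨hp₁, hp₂⟩, -⟩, rfl⟩
  rw [calJ_apply]
  exact ⟨neg_mem (J_mulVec_mem_LnD hp₁), J_mulVec_mem_LnD hp₂⟩

lemma grNeg_eq_LN_inf_comap_graph_id :
    grNeg n = LN n ⊓ (LinearMap.graph LinearMap.id).comap (calJ n) := by
  ext p
  have hgraph : p ∈ (LinearMap.graph LinearMap.id).comap (calJ n) ↔ p.2 = -p.1 := by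
    rw [Submodule.mem_comap, mem_graph_id_iff, calJ_apply, ← mulVec_neg,
      (J_mulVec_injective _ _).eq_iff, eq_comm]
  rw [Submodule.mem_inf, hgraph]
  refine ⟨fun ⟨hp₁, hp₂⟩ => ⟨⟨hp₁, ?_⟩, hp₂⟩, fun ⟨hpN, hp₂⟩ => ⟨hpN.1, hp₂⟩⟩
  exact hp₂ ▸ neg_mem hp₁

lemma graph_id_inf_map_calJ_perpIn (V : Submodule ℂ (CV n × CV n)) :
    LinearMap.graph LinearMap.id ⊓ (perpIn n V).map (calJ n)
      = (perpIn n V ⊓ grNeg n).map (calJ n) := by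
  have hperp : perpIn n V ≤ LN n := fun p hp => hp.1
  rw [inf_comm, Submodule.map_inf_eq_map_inf_comap, grNeg_eq_LN_inf_comap_graph_id,
    ← inf_assoc, inf_eq_left.2 hperp]

end CalJ

/-- For `V ⊆ Λ_N` and `Λ_V = 𝒥V^⊥ ⊕ V`,
`i(Gr(I_{2n}), Λ_V, Λ_D) = n − dim(V^⊥ ∩ Gr(−I_n))`. -/
theorem tripleIdx_graph_id_LV (n : ℕ)
    (V : Submodule ℂ (CV n × CV n)) (hV : V ≤ LN n) :
    tripleIdx (symForm2 n)
      (LinearMap.graph (LinearMap.id : CV n →ₗ[ℂ] CV n))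
      ((perpIn n V).map (calJ n) ⊔ V) (LD n)
    = n - Module.finrank ℂ ↥(perpIn n V ⊓ grNeg n) := by
  have hND : Disjoint (LN n) (LD n) := by
    rw [disjoint_iff, LN, LD, prod_inf_prod, disjoint_LnN_LnD.eq_bot, prod_bot]
  have hperp : ∀ v ∈ V, ∀ u ∈ (perpIn n V).map (calJ n), symForm2Sesq n v u = 0 := by
    rintro v hv _ ⟨p, hp, rfl⟩
    exact (symForm2_calJ v p).trans (hp.2 v hv)
  have hsplit : V ⊓ (LinearMap.graph LinearMap.id ⊔ LD n) ≤ LinearMap.graph LinearMap.id :=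
    (inf_le_inf_right _ hV).trans (prod_inf_graph_id_sup_prod_le disjoint_LnN_LnD)
  calc tripleIdx (symForm2 n) (LinearMap.graph LinearMap.id)
        ((perpIn n V).map (calJ n) ⊔ V) (LD n)
      = finrank ℂ ↥(LinearMap.graph LinearMap.id ⊓ LD n)
          - finrank ℂ ↥(LinearMap.graph LinearMap.id ⊓ (perpIn n V).map (calJ n)) :=
        tripleIdx_sup_eq_finrank_sub (B := symForm2Sesq n) isIsotropic_graph_id
          (isIsotropic_LnD.symForm2_prod isIsotropic_LnD)
          ((isIsotropic_LnN.symForm2_prod isIsotropic_LnN).mono hV)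
          (map_calJ_perpIn_le_LD V) hperp hsplit (hND.mono_left hV)
    _ = n - finrank ℂ ↥(perpIn n V ⊓ grNeg n) := by
        rw [LD, finrank_graph_id_inf_prod, finrank_LnD, graph_id_inf_map_calJ_perpIn,
          ← (Submodule.equivMapOfInjective (calJ n) calJ_injective _).finrank_eq]
end
end
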